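/- arXiv:1602.00429 — 3 statements merged into one kernel-verified Lean document; each statement's English description precedes it below -/
import Mathlib

section
/- Let Q be a regular local ring, f₁,…,f_c a Q-regular sequence, and R = Q/(f₁,…,f_c) (a local complete intersection). Let M and N be nonzero finitely generated Cohen–Macaulay R-modules (not necessarily maximal Cohen–Macaulay). If Tor_i^R(M,N) = 0 for all sufficiently large i and dim(M ⊗_R N) + dim R ≤ dim M + dim N, then Tor_i^R(M,N) = 0 for all i > 0. -/
/-!
STATEMENT 6: Over a local complete intersection `R = Q ⧸ (f₁, …, f_c)`, if `M`, `N` are nonzero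
finitely generated Cohen–Macaulay `R`-modules with `Tor_i^R(M, N) = 0` for `i ≫ 0` and
`dim (M ⊗_R N) + dim R ≤ dim M + dim N`, then `Tor_i^R(M, N) = 0` for all `i > 0`.
-/

open CategoryTheory CategoryTheory.Limits

open scoped TensorProduct

universe u

/-- A Noetherian local ring is regular if its maximal ideal can be generated by
(Krull dimension of the ring) many elements. -/
def IsRegularLocal (Q : Type u) [CommRing Q] [IsLocalRing Q] : Prop :=
  IsNoetherianRing Q ∧ ∃ s : Finset Q, Ideal.span (s : Set Q) = IsLocalRing.maximalIdeal Q ∧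
    (s.card : WithBot ℕ∞) = ringKrullDim Q

/-- The Krull dimension of a commutative ring, valued in `WithBot ℕ∞`. -/
noncomputable def ringDim (R : Type u) [CommRing R] : WithBot ℕ∞ := ringKrullDim R

/-- The Krull dimension of a module `M`: the Krull dimension of `R ⧸ ann M`. -/
noncomputable def moduleDim (R : Type u) [CommRing R] (M : Type u) [AddCommGroup M]
    [Module R M] : WithBot ℕ∞ :=
  ringDim (R ⧸ Module.annihilator R M)

/-- The depth of a module over a Noetherian local ring: the supremum of lengths of `M`-regular
sequences of elements of the maximal ideal. -/
noncomputable def moduleDepth (R : Type u) [CommRing R] [IsLocalRing R]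
    (M : Type u) [AddCommGroup M] [Module R M] : ℕ∞ :=
  sSup {n : ℕ∞ | ∃ rs : List R, n = (rs.length : ℕ∞) ∧
    (∀ x ∈ rs, x ∈ IsLocalRing.maximalIdeal R) ∧ RingTheory.Sequence.IsRegular M rs}

/-!
Only the largest `s` with `Tor_s^R(M, N) ≠ 0` matters. Suppose `s > 0`, and let `p` be an
associated prime of `Tor_s^R(M, N)`. Each of the `c` changes of rings from `R` to `Q` raises the
largest index by one without changing the top `Tor`, so over `Q` the largest index is `s + c`, and
the preimage of `p` is an associated prime of `Tor_{s + c}^Q(M, N)`. That preimage contains an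
`M`-regular sequence of length `depth M - dim (R ⧸ p)`; cutting `M` down by it raises the index by
its length and keeps the prime associated to `Tor`. The index reached is at most the projective
dimension of `N` over `Q`, that is, at most `dim Q - depth N`, whence
`s + depth M + depth N ≤ dim R + dim (R ⧸ p)`. Since `Tor` is supported on the support of `M ⊗ N`,
`dim (R ⧸ p) ≤ dim (M ⊗ N)`, which contradicts the hypothesis on dimensions.
-/

open IsLocalRing RingTheory.Sequence

open scoped Pointwise

/-! ### Regular local rings -/

section QuotientByElement

variable {S : Type*} [CommRing S]

/-- The identification of `S / xS`, as a quotient of `S`-modules, with the quotient ring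
`S ⧸ (x)`. -/
noncomputable def quotSMulTopSelfEquiv (x : S) : QuotSMulTop x S ≃ₗ[S] S ⧸ Ideal.span {x} :=
  Submodule.quotEquivOfEq _ _ (by rw [← Submodule.ideal_span_singleton_smul]; simp)

lemma isWeaklyRegular_cons_of_map_quotientMk {x : S} {rs : List S} (hx : IsSMulRegular S x)
    (hrs : IsWeaklyRegular (S ⧸ Ideal.span {x}) (rs.map (Ideal.Quotient.mk (Ideal.span {x})))) :
    IsWeaklyRegular S (x :: rs) := by
  refine .cons hx ?_
  rw [(quotSMulTopSelfEquiv x).isWeaklyRegular_congr]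
  exact (isWeaklyRegular_map_algebraMap_iff (S ⧸ Ideal.span {x}) (S ⧸ Ideal.span {x}) rs).mp hrs

lemma isLocalRing_quotient_span_singleton [IsLocalRing S] {x : S} (hx : x ∈ maximalIdeal S) :
    IsLocalRing (S ⧸ Ideal.span {x}) :=
  have : Nontrivial (S ⧸ Ideal.span {x}) := Ideal.Quotient.nontrivial_iff.mpr fun h ↦
    (mem_maximalIdeal x).mp hx (Ideal.span_singleton_eq_top.mp h)
  .of_surjective' _ Ideal.Quotient.mk_surjective

end QuotientByElement

section LocalRing

variable {Q : Type*} [CommRing Q] [IsLocalRing Q]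

lemma exists_span_insert_erase_eq_maximalIdeal [DecidableEq Q] {s : Finset Q}
    (hs : Ideal.span (s : Set Q) = maximalIdeal Q) {x : Q} (hx : x ∈ maximalIdeal Q)
    (hx2 : x ∉ maximalIdeal Q ^ 2) :
    ∃ a ∈ s, Ideal.span (insert x (s.erase a : Finset Q) : Set Q) = maximalIdeal Q := by
  obtain ⟨c, -, hc⟩ := Submodule.mem_span_finset.mp (hs.symm ▸ hx : x ∈ Ideal.span (s : Set Q))
  obtain ⟨a, ha, hunit⟩ : ∃ a ∈ s, IsUnit (c a) := by
    by_contra! h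
    refine hx2 (hc ▸ Ideal.sum_mem _ fun a ha ↦ ?_)
    rw [pow_two]
    exact Ideal.mul_mem_mul ((mem_maximalIdeal _).mpr (h a ha)) (hs ▸ Ideal.subset_span ha)
  refine ⟨a, ha, le_antisymm (Ideal.span_le.mpr ?_) (hs ▸ Ideal.span_le.mpr fun b hb ↦ ?_)⟩
  · rintro b (rfl | hb)
    exacts [hx, hs ▸ Ideal.subset_span (Finset.mem_of_mem_erase hb)]
  · by_cases hba : b = a
    · subst hba
      have hcb : c b * b = x - ∑ i ∈ s.erase b, c i • i := by
        rw [← hc, ← Finset.add_sum_erase s _ ha, add_sub_cancel_right, smul_eq_mul]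
      refine (Ideal.unit_mul_mem_iff_mem _ hunit).mp (hcb ▸ Ideal.sub_mem _ ?_ ?_)
      · exact Ideal.subset_span (Set.mem_insert _ _)
      · exact Ideal.sum_mem _ fun i hi ↦
          Ideal.mul_mem_left _ _ (Ideal.subset_span (Set.mem_insert_of_mem _ hi))
    · exact Ideal.subset_span (Set.mem_insert_of_mem _ (Finset.mem_erase.mpr ⟨hba, hb⟩))

lemma ofList_cons_eq_maximalIdeal {x : Q} (hx : x ∈ maximalIdeal Q)
    [IsLocalRing (Q ⧸ Ideal.span {x})] {rs : List Q}
    (hrs : Ideal.ofList (rs.map (Ideal.Quotient.mk (Ideal.span {x}))) =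
      maximalIdeal (Q ⧸ Ideal.span {x})) :
    Ideal.ofList (x :: rs) = maximalIdeal Q := by
  rw [← map_maximalIdeal_of_surjective _ Ideal.Quotient.mk_surjective, ← Ideal.map_ofList] at hrs
  replace hrs := congrArg (Ideal.comap (Ideal.Quotient.mk (Ideal.span {x}))) hrs
  rwa [Ideal.comap_map_quotientMk, Ideal.comap_map_quotientMk, ← Ideal.ofList_cons,
    sup_eq_right.mpr ((Ideal.span_singleton_le_iff_mem _).mpr hx)] at hrs

lemma ringKrullDim_eq_zero_of_maximalIdeal_mem_minimalPrimes
    (h : maximalIdeal Q ∈ minimalPrimes Q) : ringKrullDim Q = 0 := by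
  rw [← maximalIdeal_height_eq_ringKrullDim, Ideal.height_eq_zero_iff.mpr h]
  rfl

variable [IsNoetherianRing Q]

lemma ringKrullDim_eq_zero_of_maximalIdeal_le_sq (h : maximalIdeal Q ≤ maximalIdeal Q ^ 2) :
    ringKrullDim Q = 0 := by
  have hbot : maximalIdeal Q = ⊥ :=
    Submodule.eq_bot_of_le_smul_of_le_jacobson_bot (maximalIdeal Q) _
      (IsNoetherian.noetherian _) (by rwa [pow_two] at h) (maximalIdeal_le_jacobson _)
  exact ringKrullDim_eq_zero_of_isField (isField_iff_maximalIdeal_eq.mpr hbot)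

lemma exists_mem_maximalIdeal_notMem_sq_notMem_minimalPrimes (h : ringKrullDim Q ≠ 0) :
    ∃ x ∈ maximalIdeal Q, x ∉ maximalIdeal Q ^ 2 ∧ ∀ P ∈ minimalPrimes Q, x ∉ P := by
  have hfin := minimalPrimes.finite_of_isNoetherianRing Q
  by_contra! hcover
  have hsub : (maximalIdeal Q : Set Q) ⊆
      ⋃ I ∈ insert (maximalIdeal Q ^ 2) (minimalPrimes Q), (I : Set Q) := fun x hx ↦ by
    simp only [Set.biUnion_insert, Set.mem_union, Set.mem_iUnion₂, SetLike.mem_coe]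
    exact or_iff_not_imp_left.mpr fun hx2 ↦ by simpa using hcover x hx hx2
  obtain ⟨I, rfl | hI, hle⟩ := (Ideal.subset_union_prime_finite (hfin.insert _)
    (f := fun I : Ideal Q ↦ I) (maximalIdeal Q ^ 2) (maximalIdeal Q ^ 2)
    fun I hI hne _ ↦ (hI.resolve_left hne).1.1).mp hsub
  · exact h (ringKrullDim_eq_zero_of_maximalIdeal_le_sq hle)
  · have hmax : I = maximalIdeal Q := (le_maximalIdeal hI.1.1.ne_top).antisymm hle
    exact h (ringKrullDim_eq_zero_of_maximalIdeal_mem_minimalPrimes (hmax ▸ hI))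

lemma isDomain_of_isPrime_span_singleton {x : Q} (hx : x ∈ maximalIdeal Q)
    (hprime : (Ideal.span {x}).IsPrime) (hmin : ∀ P ∈ minimalPrimes Q, x ∉ P) : IsDomain Q := by
  obtain ⟨P, hP, hPx⟩ := Ideal.exists_minimalPrimes_le (bot_le : ⊥ ≤ Ideal.span {x})
  have hPprime : P.IsPrime := hP.1.1
  -- every `y ∈ P` is some `z * x`, and then `z ∈ P`: so `P = x P`, and Nakayama applies
  have hPbot : P = ⊥ := by
    refine Submodule.eq_bot_of_le_smul_of_le_jacobson_bot (maximalIdeal Q) _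
      (IsNoetherian.noetherian _) (fun y hy ↦ ?_) (maximalIdeal_le_jacobson _)
    obtain ⟨z, rfl⟩ := Ideal.mem_span_singleton'.mp (hPx hy)
    rw [mul_comm]
    exact Submodule.smul_mem_smul hx ((hPprime.mem_or_mem hy).resolve_right (hmin P hP))
  subst hPbot
  exact IsDomain.of_bot_isPrime Q

lemma ringKrullDim_le_card_of_span_eq_maximalIdeal {s : Finset Q}
    (hs : Ideal.span (s : Set Q) = maximalIdeal Q) : ringKrullDim Q ≤ s.card := by
  have h := Ideal.height_le_spanFinrank (maximalIdeal Q) (Ideal.IsPrime.ne_top inferInstance)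
  have hrank : (maximalIdeal Q).spanFinrank ≤ s.card := by
    simpa [← hs] using Submodule.spanFinrank_span_le_ncard_of_finite (R := Q) s.finite_toSet
  rw [← maximalIdeal_height_eq_ringKrullDim]
  exact_mod_cast h.trans (by exact_mod_cast hrank)

end LocalRing

lemma exists_ringKrullDim_eq_natCast (A : Type*) [CommRing A] [FiniteRingKrullDim A] :
    ∃ n : ℕ, ringKrullDim A = n :=
  ⟨_, Order.krullDim_eq_length_of_finiteDimensionalOrder⟩

namespace IsRegularLocal

lemma isField_of_ringKrullDim_eq_zero {Q : Type u} [CommRing Q] [IsLocalRing Q]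
    (hQ : IsRegularLocal Q) (hdim : ringKrullDim Q = 0) : IsField Q := by
  obtain ⟨-, s, hs, hcard⟩ := hQ
  obtain rfl : s = ∅ := by
    rw [hdim] at hcard
    exact Finset.card_eq_zero.mp (by exact_mod_cast hcard)
  exact isField_iff_maximalIdeal_eq.mpr (by simp [← hs])

lemma quotient_span_singleton {Q : Type u} [CommRing Q] [IsLocalRing Q] (hQ : IsRegularLocal Q)
    {x : Q} (hx : x ∈ maximalIdeal Q) (hx2 : x ∉ maximalIdeal Q ^ 2)
    [IsLocalRing (Q ⧸ Ideal.span {x})] :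
    IsRegularLocal (Q ⧸ Ideal.span {x}) ∧
      ringKrullDim (Q ⧸ Ideal.span {x}) + 1 = ringKrullDim Q := by
  classical
  obtain ⟨_, s, hs, hcard⟩ := hQ
  obtain ⟨a, ha, hspan⟩ := exists_span_insert_erase_eq_maximalIdeal hs hx hx2
  set s' := (s.erase a).image (Ideal.Quotient.mk (Ideal.span {x}))
  have hs' : Ideal.span (s' : Set (Q ⧸ Ideal.span {x})) = maximalIdeal _ := by
    rw [← map_maximalIdeal_of_surjective _ (Ideal.Quotient.mk_surjective (I := Ideal.span {x})),
      ← hspan, Ideal.map_span, Set.image_insert_eq, Ideal.span_insert, Finset.coe_image,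
      Ideal.Quotient.mk_singleton_self, Ideal.span_singleton_zero, bot_sup_eq]
  have hcard' : s'.card + 1 ≤ s.card :=
    (Nat.succ_le_succ Finset.card_image_le).trans (Finset.card_erase_add_one ha).le
  have hle : ringKrullDim (Q ⧸ Ideal.span {x}) ≤ s'.card :=
    ringKrullDim_le_card_of_span_eq_maximalIdeal hs'
  have hge : ringKrullDim Q ≤ ringKrullDim (Q ⧸ Ideal.span {x}) + 1 := by
    have h := ringKrullDim_le_ringKrullDim_quotient_add_card (R := Q) (s := {x})
      (by simpa [ringJacobson_eq_maximalIdeal] using hx)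
    rwa [Finset.coe_singleton, Finset.card_singleton, Nat.cast_one] at h
  have hchain : (s.card : WithBot ℕ∞) ≤ s'.card + 1 := hcard ▸ hge.trans (by gcongr)
  have hcard_eq : s'.card + 1 = s.card := hcard'.antisymm (by exact_mod_cast hchain)
  have hdim : ringKrullDim (Q ⧸ Ideal.span {x}) = s'.card := by
    refine hle.antisymm (ENat.WithBot.add_le_add_one_right_iff.mp ?_)
    rwa [← hcard, ← hcard_eq, Nat.cast_add, Nat.cast_one] at hge
  exact ⟨⟨inferInstance, s', hs', hdim.symm⟩, by rw [hdim, ← hcard, ← hcard_eq]; norm_cast⟩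

lemma isDomain {Q : Type u} [CommRing Q] [IsLocalRing Q] (hQ : IsRegularLocal Q) :
    IsDomain Q := by
  obtain ⟨d, hd⟩ : ∃ d : ℕ, ringKrullDim Q = d :=
    have := hQ.1
    exists_ringKrullDim_eq_natCast Q
  induction d generalizing Q with
  | zero => exact (hQ.isField_of_ringKrullDim_eq_zero (by simpa using hd)).isDomain
  | succ d ih =>
    have := hQ.1
    obtain ⟨x, hx, hx2, hmin⟩ := exists_mem_maximalIdeal_notMem_sq_notMem_minimalPrimes (Q := Q)
      (by rw [hd]; exact_mod_cast d.succ_ne_zero)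
    have := isLocalRing_quotient_span_singleton hx
    obtain ⟨hreg, hdim⟩ := hQ.quotient_span_singleton hx hx2
    have hdom := ih hreg (by
      rw [hd, Nat.cast_add, Nat.cast_one] at hdim
      exact ENat.WithBot.add_one_cancel.mp hdim)
    exact isDomain_of_isPrime_span_singleton hx
      ((Ideal.Quotient.isDomain_iff_prime _).mp hdom) hmin

lemma exists_isWeaklyRegular_ofList_eq_maximalIdeal {Q : Type u} [CommRing Q] [IsLocalRing Q]
    (hQ : IsRegularLocal Q) : ∃ rs : List Q, (rs.length : WithBot ℕ∞) = ringKrullDim Q ∧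
      IsWeaklyRegular Q rs ∧ Ideal.ofList rs = maximalIdeal Q := by
  obtain ⟨d, hd⟩ : ∃ d : ℕ, ringKrullDim Q = d :=
    have := hQ.1
    exists_ringKrullDim_eq_natCast Q
  induction d generalizing Q with
  | zero =>
    have hbot := isField_iff_maximalIdeal_eq.mp
      (hQ.isField_of_ringKrullDim_eq_zero (by simpa using hd))
    exact ⟨[], by simp [hd], .nil Q Q, by simp [hbot]⟩
  | succ d ih =>
    have := hQ.1
    have := hQ.isDomain
    obtain ⟨x, hx, hx2, -⟩ := exists_mem_maximalIdeal_notMem_sq_notMem_minimalPrimes (Q := Q)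
      (by rw [hd]; exact_mod_cast d.succ_ne_zero)
    have := isLocalRing_quotient_span_singleton hx
    obtain ⟨hreg, hdim⟩ := hQ.quotient_span_singleton hx hx2
    obtain ⟨rs, hlen, hrs, hspan⟩ := ih hreg (by
      rw [hd, Nat.cast_add, Nat.cast_one] at hdim
      exact ENat.WithBot.add_one_cancel.mp hdim)
    obtain ⟨rs, rfl⟩ := List.map_surjective_iff.mpr Ideal.Quotient.mk_surjective rs
    have hx0 : x ≠ 0 := fun h ↦ hx2 (h ▸ zero_mem _)
    exact ⟨x :: rs, by rw [← hdim, ← hlen]; simp,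
      isWeaklyRegular_cons_of_map_quotientMk (isRegular_iff_ne_zero.mpr hx0).left.isSMulRegular hrs,
      ofList_cons_eq_maximalIdeal hx hspan⟩

end IsRegularLocal

/-! ### Projective dimension over a regular local ring -/

section ShortComplex

variable {R : Type*} [Ring R] {A B C : Type u} [AddCommGroup A] [Module R A] [AddCommGroup B]
  [Module R B] [AddCommGroup C] [Module R C]

/-- The short complex of modules `A → B → C` attached to an exact pair of linear maps. -/
abbrev shortComplexOfExact {f : A →ₗ[R] B} {g : B →ₗ[R] C} (hfg : Function.Exact f g) :
    ShortComplex (ModuleCat.{u} R) :=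
  .mk (ModuleCat.ofHom f) (ModuleCat.ofHom g) (by ext x; exact hfg.apply_apply_eq_zero x)

lemma shortExact_shortComplexOfExact {f : A →ₗ[R] B} {g : B →ₗ[R] C}
    (hfg : Function.Exact f g) (hf : Function.Injective f) (hg : Function.Surjective g) :
    (shortComplexOfExact hfg).ShortExact where
  exact := (ShortComplex.ShortExact.moduleCat_exact_iff_function_exact _).mpr hfg
  mono_f := (ModuleCat.mono_iff_injective _).mpr hf
  epi_g := (ModuleCat.epi_iff_surjective _).mpr hg

end ShortComplex

lemma annihilator_sup_span_le_annihilator_quotSMulTop {R : Type*} [CommRing R] (A : Type*)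
    [AddCommGroup A] [Module R A] (x : R) :
    Module.annihilator R A ⊔ Ideal.span {x} ≤ Module.annihilator R (QuotSMulTop x A) :=
  sup_le ((x • (⊤ : Submodule R A)).mkQ.annihilator_le_of_surjective (Submodule.mkQ_surjective _))
    ((Ideal.span_singleton_le_iff_mem _).mpr (QuotSMulTop.mem_annihilator A x))

section Noetherian

variable {Q : Type u} [CommRing Q] [IsNoetherianRing Q] (d : ℕ)

lemma hasProjectiveDimensionLE_of_forall_prime {I : Ideal Q}
    (h : ∀ p : Ideal Q, p.IsPrime → I ≤ p → HasProjectiveDimensionLE (ModuleCat.of Q (Q ⧸ p)) d)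
    (A : Type u) [AddCommGroup A] [Module Q A] [Module.Finite Q A]
    (hA : I ≤ Module.annihilator Q A) : HasProjectiveDimensionLE (ModuleCat.of Q A) d := by
  revert hA
  induction ‹Module.Finite Q A› using
    IsNoetherianRing.induction_on_isQuotientEquivQuotientPrime Q with
  | subsingleton A =>
    intro _
    have : HasProjectiveDimensionLT (ModuleCat.of Q A) 0 :=
      (ModuleCat.isZero_of_subsingleton _).hasProjectiveDimensionLT_zero
    exact hasProjectiveDimensionLT_of_ge _ 0 _ (Nat.zero_le _)
  | quotient A p e =>
    intro hA
    rw [e.annihilator_eq, Ideal.annihilator_quotient] at hA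
    have := h p.1 p.2 hA
    exact hasProjectiveDimensionLT_of_iso (X := ModuleCat.of Q (Q ⧸ p.1)) e.symm.toModuleIso _
  | exact A B C f g hf hg hfg hA hC =>
    intro hB
    exact (shortExact_shortComplexOfExact hfg hf hg).hasProjectiveDimensionLT_X₂ (d + 1)
      (hA (hB.trans (f.annihilator_le_of_injective hf)))
      (hC (hB.trans (g.annihilator_le_of_surjective hg)))

variable [IsLocalRing Q] {d}

lemma hasProjectiveDimensionLE_quotient_of_residueField
    (hk : HasProjectiveDimensionLE (ModuleCat.of Q (Q ⧸ maximalIdeal Q)) d) (p : Ideal Q)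
    (hp : p.IsPrime) : HasProjectiveDimensionLE (ModuleCat.of Q (Q ⧸ p)) d := by
  induction p using WellFoundedGT.induction with
  | ind p ih =>
  obtain rfl | hlt := (le_maximalIdeal hp.ne_top).eq_or_lt
  · exact hk
  obtain ⟨x, hxm, hxp⟩ := SetLike.exists_of_lt hlt
  have hquot := hasProjectiveDimensionLE_of_forall_prime d (I := p ⊔ Ideal.span {x})
    (fun q hq hle ↦ ih q (lt_of_le_of_ne (le_sup_left.trans hle) fun hpq ↦
      hxp (hpq ▸ hle (Ideal.mem_sup_right (Ideal.mem_span_singleton_self x)))) hq)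
    (QuotSMulTop x (Q ⧸ p)) (by
      simpa only [Ideal.annihilator_quotient] using
        annihilator_sup_span_le_annihilator_quotSMulTop (Q ⧸ p) x)
  have hreg : IsSMulRegular (Q ⧸ p) x := (isSMulRegular_quotient_iff_mem_of_smul_mem p x).mpr
    fun y hy ↦ (hp.mem_or_mem hy).resolve_left hxp
  rw [← projectiveDimension_le_iff,
    ModuleCat.projectiveDimension_quotSMulTop_eq_succ_of_isSMulRegular
      (ModuleCat.of Q (Q ⧸ p)) x hreg hxm] at hquot
  rw [← projectiveDimension_le_iff]
  exact (le_add_of_nonneg_right zero_le_one).trans hquot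

theorem hasProjectiveDimensionLE_of_residueField
    (hk : HasProjectiveDimensionLE (ModuleCat.of Q (Q ⧸ maximalIdeal Q)) d)
    (A : Type u) [AddCommGroup A] [Module Q A] [Module.Finite Q A] :
    HasProjectiveDimensionLE (ModuleCat.of Q A) d :=
  hasProjectiveDimensionLE_of_forall_prime d
    (fun p hp _ ↦ hasProjectiveDimensionLE_quotient_of_residueField hk p hp) A bot_le

end Noetherian

namespace IsRegularLocal

variable {Q : Type u} [CommRing Q] [IsLocalRing Q]

lemma projectiveDimension_residueField_eq (hQ : IsRegularLocal Q) :
    projectiveDimension (ModuleCat.of Q (Q ⧸ maximalIdeal Q)) = ringKrullDim Q := by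
  have := hQ.1
  obtain ⟨xs, hlen, hxs, hspan⟩ := hQ.exists_isWeaklyRegular_ofList_eq_maximalIdeal
  have h := ModuleCat.projectiveDimension_quotient_eq_add_length_of_isWeaklyRegular
    (ModuleCat.of Q Q) xs hxs fun x hx ↦ hspan ▸ Ideal.subset_span hx
  have h0 : projectiveDimension (ModuleCat.of Q Q) = 0 :=
    ModuleCat.projectiveDimension_eq_zero_of_projective _
  rw [h0, zero_add, hlen] at h
  rw [← h]
  exact (projectiveDimension_eq_of_iso
    (Submodule.quotEquivOfEq _ _ (by rw [hspan]; simp)).toModuleIso).symm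

theorem projectiveDimension_add_length_le (hQ : IsRegularLocal Q)
    (N : Type u) [AddCommGroup N] [Module Q N] [Module.Finite Q N] [Nontrivial N]
    {rs : List Q} (hrs : IsWeaklyRegular N rs) (hmem : ∀ r ∈ rs, r ∈ maximalIdeal Q) :
    projectiveDimension (ModuleCat.of Q N) + rs.length ≤ ringKrullDim Q := by
  have := hQ.1
  obtain ⟨d, hd⟩ := exists_ringKrullDim_eq_natCast Q
  rw [← ModuleCat.projectiveDimension_quotient_eq_add_length_of_isWeaklyRegular
    (ModuleCat.of Q N) rs hrs hmem, hd, projectiveDimension_le_iff]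
  refine hasProjectiveDimensionLE_of_residueField ?_ _
  rw [← projectiveDimension_le_iff, hQ.projectiveDimension_residueField_eq, hd]

end IsRegularLocal

/-! ### Regular sequences and associated primes -/

lemma notMem_of_isSMulRegular_of_isAssociatedPrime {Q M : Type*} [CommRing Q] [IsNoetherianRing Q]
    [AddCommGroup M] [Module Q M] {P : Ideal Q} (hP : IsAssociatedPrime P M) {x : Q}
    (hxM : IsSMulRegular M x) : x ∉ P := fun hx ↦ by
  have h := Set.mem_biUnion (show P ∈ associatedPrimes Q M from hP) hx
  rw [biUnion_associatedPrimes_eq_compl_regular] at h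
  exact h hxM

lemma maximalIdeal_smul_top_lt {Q M : Type*} [CommRing Q] [IsLocalRing Q] [AddCommGroup M]
    [Module Q M] [Module.Finite Q M] [Nontrivial M] : maximalIdeal Q • (⊤ : Submodule Q M) < ⊤ :=
  (Submodule.top_ne_ideal_smul_of_le_jacobson_annihilator
    (maximalIdeal_le_jacobson _)).symm.lt_top

section Depth

variable {Q : Type u} [CommRing Q] [IsLocalRing Q] [IsNoetherianRing Q] {M : Type u}
  [AddCommGroup M] [Module Q M] [Module.Finite Q M]

lemma exists_mem_torsionBySet_notMem_smul_top {P : Ideal Q} (hP : IsAssociatedPrime P M) {x : Q}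
    (hx : x ∈ maximalIdeal Q) (hxM : IsSMulRegular M x) :
    ∃ w ∈ Submodule.torsionBySet Q M (P : Set Q), w ∉ x • (⊤ : Submodule Q M) := by
  obtain ⟨z, hz⟩ := (isAssociatedPrime_iff.mp hP).2
  have hzL : z ∈ Submodule.torsionBySet Q M (P : Set Q) :=
    (Submodule.mem_torsionBySet_iff _ _).mpr fun r ↦ by
      simpa [hz, Submodule.mem_colon_singleton] using r.2
  by_contra! h
  -- if `x v` is killed by `P` then so is `v`: hence `L = x L`, and Nakayama applies
  have hL : Submodule.torsionBySet Q M (P : Set Q) = ⊥ := by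
    refine Submodule.eq_bot_of_le_smul_of_le_jacobson_bot (maximalIdeal Q) _
      (IsNoetherian.noetherian _) (fun y hy ↦ ?_) (maximalIdeal_le_jacobson _)
    obtain ⟨v, -, rfl⟩ := h y hy
    refine Submodule.smul_mem_smul hx ((Submodule.mem_torsionBySet_iff _ _).mpr fun r ↦ hxM ?_)
    simpa [smul_comm x] using (Submodule.mem_torsionBySet_iff _ _).mp hy r
  rw [hL, Submodule.mem_bot] at hzL
  exact hP.isPrime.ne_top (by simp [hz, hzL])

lemma exists_isAssociatedPrime_quotSMulTop {P : Ideal Q} (hP : IsAssociatedPrime P M) {x : Q}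
    (hx : x ∈ maximalIdeal Q) (hxM : IsSMulRegular M x) :
    ∃ P', IsAssociatedPrime P' (QuotSMulTop x M) ∧ P ≤ P' ∧ x ∈ P' := by
  obtain ⟨w, hw, hwx⟩ := exists_mem_torsionBySet_notMem_smul_top hP hx hxM
  obtain ⟨P', hP', hle⟩ := exists_le_isAssociatedPrime_of_isNoetherianRing Q
    (Submodule.Quotient.mk w : QuotSMulTop x M) (by rwa [Ne, Submodule.Quotient.mk_eq_zero])
  refine ⟨P', hP', fun r hr ↦ hle ?_, hle ?_⟩ <;>
    rw [Submodule.mem_colon_singleton, ← Submodule.Quotient.mk_smul]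
  · rw [(Submodule.mem_torsionBySet_iff _ _).mp hw ⟨r, hr⟩]
    simp
  · rw [Submodule.mem_bot, Submodule.Quotient.mk_eq_zero]
    exact Submodule.smul_mem_pointwise_smul _ _ _ trivial

theorem length_le_ringKrullDim_quotient_of_isAssociatedPrime {rs : List Q}
    (hrs : IsWeaklyRegular M rs) (hmem : ∀ r ∈ rs, r ∈ maximalIdeal Q) {P : Ideal Q}
    (hP : IsAssociatedPrime P M) : (rs.length : WithBot ℕ∞) ≤ ringKrullDim (Q ⧸ P) := by
  induction rs generalizing M P with
  | nil =>
    have := hP.isPrime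
    simpa using ringKrullDim_nonneg_of_nontrivial
  | cons x rs ih =>
    have := hP.isPrime
    rw [isWeaklyRegular_cons_iff] at hrs
    simp only [List.mem_cons, forall_eq_or_imp] at hmem
    obtain ⟨P', hP', hle, hxP'⟩ := exists_isAssociatedPrime_quotSMulTop hP hmem.1 hrs.1
    have hxP := notMem_of_isSMulRegular_of_isAssociatedPrime hP hrs.1
    have hdim := ringKrullDim_succ_le_of_surjective (Ideal.Quotient.factor hle)
      (Ideal.Quotient.factor_surjective hle) (r := Ideal.Quotient.mk P x)
      (mem_nonZeroDivisors_of_ne_zero (by rwa [Ne, Ideal.Quotient.eq_zero_iff_mem]))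
      (by rwa [Ideal.Quotient.factor_mk, Ideal.Quotient.eq_zero_iff_mem])
    have hlen := ih hrs.2 hmem.2 hP'
    rw [List.length_cons, Nat.cast_add, Nat.cast_one]
    exact le_trans (by gcongr) hdim

lemma exists_mem_isSMulRegular_of_ringKrullDim_quotient_lt {rs : List Q}
    (hrs : IsWeaklyRegular M rs) (hmem : ∀ r ∈ rs, r ∈ maximalIdeal Q) {p : Ideal Q}
    (hp : ringKrullDim (Q ⧸ p) < rs.length) : ∃ x ∈ p, IsSMulRegular M x := by
  by_contra! h
  have hsub : (p : Set Q) ⊆ ⋃ P ∈ associatedPrimes Q M, (P : Set Q) := by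
    rw [biUnion_associatedPrimes_eq_compl_regular]
    exact h
  obtain ⟨P, hP, hpP⟩ := (Ideal.subset_union_prime_finite (associatedPrimes.finite Q M)
    (f := fun P : Ideal Q ↦ P) ⊥ ⊥ fun P hP _ _ ↦ hP.isPrime).mp hsub
  exact hp.not_ge ((length_le_ringKrullDim_quotient_of_isAssociatedPrime hrs hmem hP).trans
    (ringKrullDim_le_of_surjective _ (Ideal.Quotient.factor_surjective hpP)))

variable (M) in
lemma moduleDepth_le_moduleDim [Nontrivial M] :
    (moduleDepth Q M : WithBot ℕ∞) ≤ moduleDim Q M := by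
  obtain ⟨P, hP⟩ := associatedPrimes.nonempty Q M
  have hann : Module.annihilator Q M ≤ P :=
    Submodule.annihilator_top.symm.le.trans (IsAssociatedPrime.annihilator_le hP)
  have hdim : ringKrullDim (Q ⧸ P) ≤ moduleDim Q M :=
    ringKrullDim_le_of_surjective _ (Ideal.Quotient.factor_surjective hann)
  have := hP.isPrime
  obtain ⟨d, hd⟩ := WithBot.ne_bot_iff_exists.mp
    ((WithBot.bot_lt_coe (0 : ℕ∞)).trans_le (ringKrullDim_nonneg_of_nontrivial.trans hdim)).ne'
  rw [← hd] at hdim ⊢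
  refine WithBot.coe_le_coe.mpr (sSup_le ?_)
  rintro _ ⟨rs, rfl, hmem, hrs⟩
  exact WithBot.coe_le_coe.mp
    ((length_le_ringKrullDim_quotient_of_isAssociatedPrime hrs.1 hmem hP).trans hdim)

variable (M) in
lemma exists_isRegular_length_eq_moduleDepth [Nontrivial M] :
    ∃ rs : List Q, moduleDepth Q M = rs.length ∧ (∀ r ∈ rs, r ∈ maximalIdeal Q) ∧
      IsRegular M rs := by
  have hlt : (moduleDepth Q M : WithBot ℕ∞) < ⊤ :=
    (moduleDepth_le_moduleDim M).trans_lt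
      ((ringKrullDim_quotient_le _).trans_lt ringKrullDim_lt_top)
  have : Nonempty {n : ℕ∞ | ∃ rs : List Q, n = rs.length ∧ (∀ r ∈ rs, r ∈ maximalIdeal Q) ∧
      IsRegular M rs} := ⟨0, [], rfl, by simp, .nil Q M⟩
  exact ENat.sSup_mem_of_nonempty_of_lt_top (WithBot.coe_lt_coe.mp hlt)

-- By Rees, regular sequences of length `n` on `M` exist iff `Ext^i(k, M) = 0` for all `i < n`, and
-- these groups are compared along `0 → M → M → M/xM → 0`.
theorem exists_isRegular_quotSMulTop {x : Q} (hx : x ∈ maximalIdeal Q) (hxM : IsSMulRegular M x)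
    {rs : List Q} (hrs : IsRegular M rs) (hmem : ∀ r ∈ rs, r ∈ maximalIdeal Q) {n : ℕ}
    (hn : rs.length = n + 1) :
    ∃ ys : List Q, ys.length = n ∧ (∀ r ∈ ys, r ∈ maximalIdeal Q) ∧
      IsRegular (QuotSMulTop x M) ys := by
  have : Nontrivial M := hrs.nontrivial
  have := nontrivial_quotSMulTop_of_mem_maximalIdeal M hx
  have hExt : ∀ i < n + 1, Subsingleton (Abelian.Ext
      (ModuleCat.of Q (Shrink.{u} (Q ⧸ maximalIdeal Q))) (ModuleCat.of Q M) i) :=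
    ((ModuleCat.exists_isRegular_tfae (maximalIdeal Q) (n + 1) (ModuleCat.of Q M)
      maximalIdeal_smul_top_lt).out 3 1 rfl rfl).mp ⟨rs, hn, hmem, hrs⟩
  refine ((ModuleCat.exists_isRegular_tfae (maximalIdeal Q) n
    (ModuleCat.of Q (QuotSMulTop x M)) maximalIdeal_smul_top_lt).out 1 3).mp fun i hi ↦ ?_
  have hzero := AddCommGrpCat.isZero_of_iff_subsingleton.mpr (hExt i (by lia))
  have hzero_succ := AddCommGrpCat.isZero_of_iff_subsingleton.mpr (hExt (i + 1) (by lia))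
  exact AddCommGrpCat.subsingleton_of_isZero <| ShortComplex.Exact.isZero_of_both_zeros
    ((Abelian.Ext.covariant_sequence_exact₃' _
      (IsSMulRegular.smulShortComplex_shortExact (M := ModuleCat.of Q M) hxM)) i (i + 1) rfl)
    (hzero.eq_zero_of_src _) (hzero_succ.eq_zero_of_tgt _)

theorem exists_isWeaklyRegular_mem_of_ringKrullDim_quotient_le {p : Ideal Q} (hp : p ≠ ⊤) {t : ℕ}
    (ht : ringKrullDim (Q ⧸ p) ≤ t) {rs : List Q} (hrs : IsRegular M rs)
    (hmem : ∀ r ∈ rs, r ∈ maximalIdeal Q) {l : ℕ} (hl : l ≤ rs.length - t) :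
    ∃ ys : List Q, ys.length = l ∧ (∀ r ∈ ys, r ∈ p) ∧ IsWeaklyRegular M ys := by
  induction l generalizing M rs with
  | zero => exact ⟨[], rfl, by simp, .nil _ _⟩
  | succ l ih =>
    obtain ⟨x, hxp, hx⟩ := exists_mem_isSMulRegular_of_ringKrullDim_quotient_lt hrs.1 hmem
      (ht.trans_lt (by exact_mod_cast (by lia : t < rs.length)))
    obtain ⟨zs, hzs_len, hzs_mem, hzs⟩ := exists_isRegular_quotSMulTop (le_maximalIdeal hp hxp) hx
      hrs hmem (n := rs.length - 1) (by lia)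
    obtain ⟨ys, hys_len, hys_mem, hys⟩ := ih hzs hzs_mem (by lia)
    exact ⟨x :: ys, by simp [hys_len], by simpa using ⟨hxp, hys_mem⟩, .cons hx hys⟩

end Depth

/-! ### Tor in the first variable -/

section MapHomologicalComplex

variable {C D : Type*} [Category* C] [Category* D] [Abelian C] [Abelian D]

lemma exactAt_succ_mapHomologicalComplex_obj (F : C ⥤ D) [F.Additive]
    (hF : ∀ S : ShortComplex C, S.Exact → (S.map F).Exact) (K : ChainComplex C ℕ) (i : ℕ)
    (h : K.ExactAt (i + 1)) : ((F.mapHomologicalComplex _).obj K).ExactAt (i + 1) := by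
  have h1 := (HomologicalComplex.exactAt_iff' K (i + 2) (i + 1) i (by simp) (by simp)).mp h
  exact (HomologicalComplex.exactAt_iff' ((F.mapHomologicalComplex _).obj K) (i + 2) (i + 1) i
    (by simp) (by simp)).mpr (hF _ h1)

variable {X : C} (P : ProjectiveResolution X)

lemma opcyclesMap_comp_fromLeftDerivedZero' {F G : C ⥤ D} [F.Additive] [G.Additive] (α : F ⟶ G) :
    HomologicalComplex.opcyclesMap ((NatTrans.mapHomologicalComplex α _).app P.complex) 0 ≫
      P.fromLeftDerivedZero' G = P.fromLeftDerivedZero' F ≫ α.app X := by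
  rw [← cancel_epi (HomologicalComplex.pOpcycles _ _), HomologicalComplex.p_opcyclesMap_assoc,
    ProjectiveResolution.pOpcycles_comp_fromLeftDerivedZero',
    ProjectiveResolution.pOpcycles_comp_fromLeftDerivedZero'_assoc]
  exact (α.naturality (P.π.f 0)).symm

/-- The zeroth homology of a right exact functor applied to a projective resolution. -/
noncomputable def homologyZeroIso (F : C ⥤ D) [F.Additive] [PreservesFiniteColimits F] :
    ((F.mapHomologicalComplex _).obj P.complex).homology 0 ≅ F.obj X :=
  ChainComplex.isoHomologyι₀ _ ≪≫ asIso (P.fromLeftDerivedZero' F)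

lemma homologyZeroIso_hom_naturality {F G : C ⥤ D} [F.Additive] [G.Additive]
    [PreservesFiniteColimits F] [PreservesFiniteColimits G] (α : F ⟶ G) :
    HomologicalComplex.homologyMap ((NatTrans.mapHomologicalComplex α _).app P.complex) 0 ≫
      (homologyZeroIso P G).hom = (homologyZeroIso P F).hom ≫ α.app X := by
  have h := opcyclesMap_comp_fromLeftDerivedZero' P α
  simp only [homologyZeroIso, Iso.trans_hom, asIso_hom, Category.assoc, ← h]
  exact HomologicalComplex.homologyι_naturality_assoc _ _ _

end MapHomologicalComplex

section TorFunctor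

open MonoidalCategory

variable {R : Type u} [CommRing R]

/-- The functor `M ↦ M ⊗ P`, for a fixed chain complex `P`. -/
noncomputable def tensorComplex (P : ChainComplex (ModuleCat.{u} R) ℕ) :
    ModuleCat.{u} R ⥤ ChainComplex (ModuleCat.{u} R) ℕ where
  obj M := (((tensoringLeft (ModuleCat.{u} R)).obj M).mapHomologicalComplex _).obj P
  map f := (NatTrans.mapHomologicalComplex ((tensoringLeft (ModuleCat.{u} R)).map f) _).app P
  map_id M := by ext i; simp
  map_comp f g := by ext i; simp

instance (P : ChainComplex (ModuleCat.{u} R) ℕ) : (tensorComplex P).Linear R where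
  map_smul {X Y} f r := by
    apply HomologicalComplex.hom_ext
    intro i
    exact MonoidalLinear.smul_whiskerRight r f _

instance (P : ChainComplex (ModuleCat.{u} R) ℕ) : (tensorComplex P).Additive where
  map_add {X Y f g} := by
    apply HomologicalComplex.hom_ext
    intro i
    exact MonoidalPreadditive.add_whiskerRight f g

lemma shortExact_map_tensorComplex (P : ChainComplex (ModuleCat.{u} R) ℕ)
    (hP : ∀ i, Module.Flat R (P.X i)) {S : ShortComplex (ModuleCat.{u} R)} (hS : S.ShortExact) :
    (S.map (tensorComplex P)).ShortExact := by
  apply HomologicalComplex.shortExact_of_degreewise_shortExact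
  intro i
  have := hP i
  exact hS.map_of_exact (tensorRight (P.X i))

/-- `Tor` as a functor of the first variable. -/
noncomputable def torFunctor (N : ModuleCat.{u} R) (i : ℕ) : ModuleCat.{u} R ⥤ ModuleCat.{u} R :=
  tensorComplex (projectiveResolution N).complex ⋙ HomologicalComplex.homologyFunctor _ _ i

lemma flat_projectiveResolution_X (N : ModuleCat.{u} R) (i : ℕ) :
    Module.Flat R ((projectiveResolution N).complex.X i) := by
  have h : Projective ((projectiveResolution N).complex.X i) :=
    (projectiveResolution N).projective i
  have : Module.Projective R ((projectiveResolution N).complex.X i) :=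
    (IsProjective.iff_projective _).mpr h
  infer_instance

/-- Comparison of `torFunctor` with `Tor`. -/
noncomputable def torFunctorObjIso (M N : ModuleCat.{u} R) (i : ℕ) :
    ((Tor (ModuleCat.{u} R) i).obj M).obj N ≅ (torFunctor N i).obj M :=
  (projectiveResolution N).isoLeftDerivedObj ((tensoringLeft (ModuleCat.{u} R)).obj M) i

lemma isZero_torFunctor_succ_obj (M N : ModuleCat.{u} R) [Module.Flat R M] (i : ℕ) :
    IsZero ((torFunctor N (i + 1)).obj M) :=
  (exactAt_succ_mapHomologicalComplex_obj ((tensoringLeft (ModuleCat.{u} R)).obj M)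
    (Module.Flat.lTensor_shortComplex_exact M) _ i
    ((projectiveResolution N).complex_exactAt_succ i)).isZero_homology

instance (M : ModuleCat.{u} R) :
    PreservesFiniteColimits ((tensoringLeft (ModuleCat.{u} R)).obj M) :=
  inferInstanceAs (PreservesFiniteColimits (tensorLeft M))

/-- `Tor₀` is the tensor product. -/
noncomputable def torFunctorZeroIso (N : ModuleCat.{u} R) : torFunctor N 0 ≅ tensorRight N :=
  NatIso.ofComponents (fun _ ↦ homologyZeroIso (projectiveResolution N) _)
    fun f ↦ homologyZeroIso_hom_naturality (projectiveResolution N)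
      ((tensoringLeft (ModuleCat.{u} R)).map f)

instance (N : ModuleCat.{u} R) (i : ℕ) : (torFunctor N i).Linear R where
  map_smul f r := by
    have h : (torFunctor N i).map (r • f) = HomologicalComplex.homologyMap
        ((tensorComplex (projectiveResolution N).complex).map (r • f)) i := rfl
    rw [h, Functor.map_smul]
    exact ShortComplex.homologyMap_smul ((HomologicalComplex.shortComplexFunctor _ _ i).map
      ((tensorComplex (projectiveResolution N).complex).map f)) r

end TorFunctor

section TorModule

variable (R : Type u) [CommRing R]

/-- The module `Tor_i(M, N)`. -/
abbrev TorModule (i : ℕ) (M N : Type u) [AddCommGroup M] [Module R M] [AddCommGroup N]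
    [Module R N] : Type u :=
  (torFunctor (ModuleCat.of R N) i).obj (ModuleCat.of R M)

variable {R} {M M' A B C : Type u} [AddCommGroup M] [Module R M] [AddCommGroup M'] [Module R M']
  [AddCommGroup A] [Module R A] [AddCommGroup B] [Module R B] [AddCommGroup C] [Module R C]
  (N : Type u) [AddCommGroup N] [Module R N]

/-- The map on `Tor_i` induced by a linear map in the first variable. -/
noncomputable def torMap (i : ℕ) (f : M →ₗ[R] M') : TorModule R i M N →ₗ[R] TorModule R i M' N :=
  ((torFunctor (ModuleCat.of R N) i).map (ModuleCat.ofHom f)).hom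

@[simp]
lemma torMap_lsmul (i : ℕ) (x : R) :
    torMap N i (LinearMap.lsmul R M x) = LinearMap.lsmul R (TorModule R i M N) x := by
  have h : ModuleCat.ofHom (LinearMap.lsmul R M x) = x • 𝟙 (ModuleCat.of R M) := rfl
  simp only [torMap]
  rw [h, Functor.map_smul, CategoryTheory.Functor.map_id]
  rfl

/-- The zeroth `Tor` is the tensor product. -/
noncomputable def torZeroEquiv (M : Type u) [AddCommGroup M] [Module R M] :
    TorModule R 0 M N ≃ₗ[R] M ⊗[R] N :=
  ((torFunctorZeroIso (ModuleCat.of R N)).app (ModuleCat.of R M)).toLinearEquiv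

lemma torZeroEquiv_torMap (f : M →ₗ[R] M') (t : TorModule R 0 M N) :
    torZeroEquiv N M' (torMap N 0 f t) = f.rTensor N (torZeroEquiv N M t) :=
  congr($((torFunctorZeroIso (ModuleCat.of R N)).hom.naturality (ModuleCat.ofHom f)).hom t)

lemma subsingleton_torModule_succ_of_flat (i : ℕ) [Module.Flat R M] :
    Subsingleton (TorModule R (i + 1) M N) :=
  ModuleCat.subsingleton_of_isZero
    (isZero_torFunctor_succ_obj (ModuleCat.of R M) (ModuleCat.of R N) i)

variable {f : A →ₗ[R] B} {g : B →ₗ[R] C} (hfg : Function.Exact f g)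
  (hf : Function.Injective f) (hg : Function.Surjective g)
include hfg hf hg

lemma shortExact_map_tensorComplex_projectiveResolution :
    ((shortComplexOfExact hfg).map
      (tensorComplex (projectiveResolution (ModuleCat.of R N)).complex)).ShortExact :=
  shortExact_map_tensorComplex _ (flat_projectiveResolution_X _)
    (shortExact_shortComplexOfExact hfg hf hg)

lemma torMap_exact (i : ℕ) : Function.Exact (torMap N i f) (torMap N i g) :=
  (ShortComplex.ShortExact.moduleCat_exact_iff_function_exact _).mp
    ((shortExact_map_tensorComplex_projectiveResolution N hfg hf hg).homology_exact₂ i)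

lemma exists_exact_torMap_connecting (i : ℕ) :
    ∃ δ : TorModule R (i + 1) C N →ₗ[R] TorModule R i A N,
      Function.Exact (torMap N (i + 1) g) δ ∧ Function.Exact δ (torMap N i f) := by
  have h := shortExact_map_tensorComplex_projectiveResolution N hfg hf hg
  exact ⟨(h.δ (i + 1) i (by simp)).hom,
    (ShortComplex.ShortExact.moduleCat_exact_iff_function_exact _).mp
      (h.homology_exact₃ (i + 1) i (by simp)),
    (ShortComplex.ShortExact.moduleCat_exact_iff_function_exact _).mp
      (h.homology_exact₁ (i + 1) i (by simp))⟩

end TorModule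

section Exact

variable {R : Type*} [Ring R] {W X Y Z : Type*} [AddCommGroup W] [Module R W] [AddCommGroup X]
  [Module R X] [AddCommGroup Y] [Module R Y] [AddCommGroup Z] [Module R Z]
  {f : W →ₗ[R] X} {g : X →ₗ[R] Y} {h : Y →ₗ[R] Z}

lemma nonempty_linearEquiv_ker_of_exact [Subsingleton W] (hfg : Function.Exact f g)
    (hgh : Function.Exact g h) : Nonempty (X ≃ₗ[R] LinearMap.ker h) :=
  have hg := (LinearMap.injective_iff_eq_zero_of_exact hfg).mpr (Subsingleton.elim _ _)
  ⟨(LinearEquiv.ofInjective g hg).trans (LinearEquiv.ofEq _ _ hgh.linearMap_ker_eq.symm)⟩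

lemma nonempty_linearEquiv_of_exact [Subsingleton W] [Subsingleton Z] (hfg : Function.Exact f g)
    (hgh : Function.Exact g h) : Nonempty (X ≃ₗ[R] Y) := by
  obtain ⟨e⟩ := nonempty_linearEquiv_ker_of_exact hfg hgh
  exact ⟨e.trans (LinearEquiv.ofTop _ (LinearMap.ker_eq_top.mpr (Subsingleton.elim _ _)))⟩

lemma subsingleton_of_exact [Subsingleton W] [Subsingleton Y] (hfg : Function.Exact f g) :
    Subsingleton X :=
  have hg := (LinearMap.injective_iff_eq_zero_of_exact hfg).mpr (Subsingleton.elim _ _)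
  hg.subsingleton

end Exact

section DimensionShift

variable {R : Type u} [CommRing R] {M A B C : Type u} [AddCommGroup M] [Module R M]
  [AddCommGroup A] [Module R A] [AddCommGroup B] [Module R B] [AddCommGroup C] [Module R C]
  (N : Type u) [AddCommGroup N] [Module R N]

section ShortExact

variable {f : A →ₗ[R] B} {g : B →ₗ[R] C} (hfg : Function.Exact f g)
  (hf : Function.Injective f) (hg : Function.Surjective g)
include hfg hf hg

lemma nonempty_torModule_add_two_linearEquiv [Module.Flat R B] (i : ℕ) :
    Nonempty (TorModule R (i + 2) C N ≃ₗ[R] TorModule R (i + 1) A N) := by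
  obtain ⟨δ, h1, h2⟩ := exists_exact_torMap_connecting N hfg hf hg (i + 1)
  have := subsingleton_torModule_succ_of_flat (R := R) (M := B) N (i + 1)
  have := subsingleton_torModule_succ_of_flat (R := R) (M := B) N i
  exact nonempty_linearEquiv_of_exact h1 h2

lemma nonempty_torModule_one_linearEquiv_ker_rTensor [Module.Flat R B] :
    Nonempty (TorModule R 1 C N ≃ₗ[R] LinearMap.ker (f.rTensor N)) := by
  obtain ⟨δ, h1, h2⟩ := exists_exact_torMap_connecting N hfg hf hg 0
  have := subsingleton_torModule_succ_of_flat (R := R) (M := B) N 0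
  have h3 : Function.Exact ((torZeroEquiv N A).toLinearMap ∘ₗ δ) (f.rTensor N) := by
    intro t
    obtain ⟨t, rfl⟩ := (torZeroEquiv N A).surjective t
    rw [← torZeroEquiv_torMap, LinearEquiv.map_eq_zero_iff, h2 t]
    simp
  exact nonempty_linearEquiv_ker_of_exact
    (h1.comp_injective _ (torZeroEquiv N A).injective (map_zero _)) h3

lemma nonempty_torModule_linearEquiv_of_subsingleton (i : ℕ)
    [Subsingleton (TorModule R (i + 1) C N)] [Subsingleton (TorModule R i C N)] :
    Nonempty (TorModule R i A N ≃ₗ[R] TorModule R i B N) := by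
  obtain ⟨δ, -, h⟩ := exists_exact_torMap_connecting N hfg hf hg i
  exact nonempty_linearEquiv_of_exact h (torMap_exact N hfg hf hg i)

end ShortExact

section Syzygy

variable {g : B →ₗ[R] C} (hg : Function.Surjective g)
include hg

lemma nonempty_torModule_add_two_linearEquiv_ker [Module.Flat R B] (i : ℕ) :
    Nonempty (TorModule R (i + 2) C N ≃ₗ[R] TorModule R (i + 1) (LinearMap.ker g) N) :=
  nonempty_torModule_add_two_linearEquiv N g.exact_subtype_ker_map
    (LinearMap.ker g).subtype_injective hg i

lemma nonempty_torModule_one_linearEquiv_ker_rTensor_subtype [Module.Flat R B] :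
    Nonempty (TorModule R 1 C N ≃ₗ[R] LinearMap.ker ((LinearMap.ker g).subtype.rTensor N)) :=
  nonempty_torModule_one_linearEquiv_ker_rTensor N g.exact_subtype_ker_map
    (LinearMap.ker g).subtype_injective hg

end Syzygy

section QuotSMulTop

variable {x : R} (hx : IsSMulRegular M x)
include hx

lemma exists_exact_torModule_quotSMulTop (i : ℕ) :
    ∃ (π : TorModule R (i + 1) M N →ₗ[R] TorModule R (i + 1) (QuotSMulTop x M) N)
      (δ : TorModule R (i + 1) (QuotSMulTop x M) N →ₗ[R] TorModule R i M N),
      Function.Exact π δ ∧ Function.Exact δ (LinearMap.lsmul R (TorModule R i M N) x) := by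
  obtain ⟨δ, h1, h2⟩ := exists_exact_torMap_connecting N
    (LinearMap.exact_lsmul_mkQ_smul_top M x) hx (Submodule.mkQ_surjective _) i
  rw [torMap_lsmul] at h2
  exact ⟨_, δ, h1, h2⟩

lemma subsingleton_torModule_quotSMulTop (i : ℕ) [Subsingleton (TorModule R (i + 1) M N)]
    [Subsingleton (TorModule R i M N)] :
    Subsingleton (TorModule R (i + 1) (QuotSMulTop x M) N) := by
  obtain ⟨π, δ, h, -⟩ := exists_exact_torModule_quotSMulTop N hx i
  exact subsingleton_of_exact h

lemma nonempty_torModule_quotSMulTop_linearEquiv_ker (i : ℕ)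
    [Subsingleton (TorModule R (i + 1) M N)] :
    Nonempty (TorModule R (i + 1) (QuotSMulTop x M) N ≃ₗ[R]
      LinearMap.ker (LinearMap.lsmul R (TorModule R i M N) x)) := by
  obtain ⟨π, δ, h1, h2⟩ := exists_exact_torModule_quotSMulTop N hx i
  exact nonempty_linearEquiv_ker_of_exact h1 h2

end QuotSMulTop

end DimensionShift

/-! ### Tor and projective dimension -/

section ProjectiveDimension

variable {R : Type u} [CommRing R]

lemma hasProjectiveDimensionLT_quotient_range_d {N : ModuleCat.{u} R} (P : ProjectiveResolution N)
    (j n : ℕ) (hN : HasProjectiveDimensionLT N (n + 1 + j)) :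
    HasProjectiveDimensionLT (ModuleCat.of R (P.complex.X j ⧸
      LinearMap.range (P.complex.d (j + 1) j).hom)) (n + 1) := by
  induction j generalizing n with
  | zero =>
    have h : Function.Exact (P.complex.d 1 0).hom (P.π.f 0).hom :=
      (ShortComplex.ShortExact.moduleCat_exact_iff_function_exact _).mp P.exact₀
    have hs : Function.Surjective (P.π.f 0).hom :=
      (ModuleCat.epi_iff_surjective _).mp inferInstance
    exact hasProjectiveDimensionLT_of_iso (X := N)
      (h.linearEquivOfSurjective hs).symm.toModuleIso _
  | succ j ih =>
    set d := (P.complex.d (j + 1) j).hom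
    have hd : Function.Exact (P.complex.d (j + 2) (j + 1)).hom d :=
      (ShortComplex.ShortExact.moduleCat_exact_iff_function_exact _).mp (P.exact_succ j)
    have hS := shortExact_shortComplexOfExact (LinearMap.exact_subtype_mkQ (LinearMap.range d))
      (Submodule.subtype_injective _) (Submodule.mkQ_surjective _)
    have : Projective (ModuleCat.of R (P.complex.X j)) := P.projective j
    have hrange : HasProjectiveDimensionLT (ModuleCat.of R (LinearMap.range d)) (n + 1) :=
      (hS.hasProjectiveDimensionLT_X₃_iff n this).mp (ih (n + 1) (by convert hN using 1; omega))
    have e := (Submodule.quotEquivOfEq _ _ hd.linearMap_ker_eq.symm).trans d.quotKerEquivRange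
    exact hasProjectiveDimensionLT_of_iso (X := ModuleCat.of R (LinearMap.range d))
      e.symm.toModuleIso _

lemma lTensor_exact_of_flat_quotient_range (M : Type*) {X Y W : Type*} [AddCommGroup M]
    [Module R M] [AddCommGroup X] [Module R X] [AddCommGroup Y] [Module R Y] [AddCommGroup W]
    [Module R W] {f : X →ₗ[R] Y} {g : Y →ₗ[R] W} (hfg : Function.Exact f g)
    [Module.Flat R (W ⧸ LinearMap.range g)] :
    Function.Exact (f.lTensor M) (g.lTensor M) := by
  have hrange : Function.Exact f g.rangeRestrict := by
    rw [LinearMap.exact_iff, LinearMap.ker_rangeRestrict, hfg.linearMap_ker_eq]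
  have hinj : Function.Injective ((LinearMap.range g).subtype.lTensor M) :=
    LinearMap.lTensor_injective_of_exact_of_flat _ (Submodule.mkQ_surjective _) _
      (Submodule.subtype_injective _) (LinearMap.exact_subtype_mkQ _) M
  have h := (lTensor_exact M hrange g.surjective_rangeRestrict).comp_injective _ hinj (map_zero _)
  rwa [← LinearMap.coe_comp, ← LinearMap.lTensor_comp] at h

lemma subsingleton_torModule_of_hasProjectiveDimensionLT (M N : Type u) [AddCommGroup M]
    [Module R M] [AddCommGroup N] [Module R N] (i : ℕ)
    (hN : HasProjectiveDimensionLT (ModuleCat.of R N) (i + 1)) :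
    Subsingleton (TorModule R (i + 1) M N) := by
  set P := projectiveResolution (ModuleCat.of R N)
  have hproj : Module.Projective R
      (P.complex.X i ⧸ LinearMap.range (P.complex.d (i + 1) i).hom) :=
    (IsProjective.iff_projective _).mpr (projective_iff_hasProjectiveDimensionLT_one.mpr
      (hasProjectiveDimensionLT_quotient_range_d P i 0 (by convert hN using 1; omega)))
  have hexact := lTensor_exact_of_flat_quotient_range M
    ((ShortComplex.ShortExact.moduleCat_exact_iff_function_exact _).mp (P.exact_succ i))
  have hexactAt : ((tensorComplex P.complex).obj (ModuleCat.of R M)).ExactAt (i + 1) := by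
    rw [HomologicalComplex.exactAt_iff' _ (i + 2) (i + 1) i (by simp) (by simp)]
    exact (ShortComplex.ShortExact.moduleCat_exact_iff_function_exact _).mpr hexact
  exact ModuleCat.subsingleton_of_isZero hexactAt.isZero_homology

lemma le_projectiveDimension_of_nontrivial_torModule (M N : Type u) [AddCommGroup M] [Module R M]
    [AddCommGroup N] [Module R N] (i : ℕ) [hnt : Nontrivial (TorModule R i M N)] :
    i ≤ projectiveDimension (ModuleCat.of R N) := by
  contrapose! hnt
  have hN := projectiveDimension_lt_iff.mp hnt
  cases i with
  | zero =>
    have : Subsingleton N :=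
      ModuleCat.subsingleton_of_isZero ((hasProjectiveDimensionLT_zero_iff_isZero _).mp hN)
    exact (torZeroEquiv N M).subsingleton
  | succ i => exact subsingleton_torModule_of_hasProjectiveDimensionLT M N i hN

end ProjectiveDimension

section AssociatedPrime

variable {R : Type u} [CommRing R] [IsNoetherianRing R] {p : Ideal R}

lemma isAssociatedPrime_ker_lsmul {T : Type*} [AddCommGroup T] [Module R T]
    (hp : IsAssociatedPrime p T) {x : R} (hx : x ∈ p) :
    IsAssociatedPrime p (LinearMap.ker (LinearMap.lsmul R T x)) := by
  obtain ⟨hprime, t, rfl⟩ := isAssociatedPrime_iff.mp hp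
  refine isAssociatedPrime_iff.mpr
    ⟨hprime, ⟨t, by simpa [Submodule.mem_colon_singleton] using hx⟩, ?_⟩
  ext r
  simp [Submodule.mem_colon_singleton, Subtype.ext_iff]

lemma exists_isAssociatedPrime_torModule_add_length {M : Type u} [AddCommGroup M] [Module R M]
    (N : Type u) [AddCommGroup N] [Module R N] {xs : List R} (hxs : IsWeaklyRegular M xs)
    (hmem : ∀ x ∈ xs, x ∈ p) {s : ℕ} (hs : ∀ i, s < i → Subsingleton (TorModule R i M N))
    (hp : IsAssociatedPrime p (TorModule R s M N)) :
    ∃ (M' : Type u) (_ : AddCommGroup M') (_ : Module R M'),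
      IsAssociatedPrime p (TorModule R (s + xs.length) M' N) := by
  induction xs generalizing M s with
  | nil => exact ⟨M, _, _, hp⟩
  | cons x xs ih =>
    rw [isWeaklyRegular_cons_iff] at hxs
    rw [List.forall_mem_cons] at hmem
    have := hs (s + 1) (by omega)
    obtain ⟨e⟩ := nonempty_torModule_quotSMulTop_linearEquiv_ker N hxs.1 s
    have hvanish : ∀ i, s + 1 < i → Subsingleton (TorModule R i (QuotSMulTop x M) N) := by
      rintro (_ | i) hi
      · omega
      have := hs i (by omega)
      have := hs (i + 1) (by omega)
      exact subsingleton_torModule_quotSMulTop N hxs.1 i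
    rw [List.length_cons, add_comm xs.length, ← add_assoc]
    exact ih hxs.2 hmem.2 hvanish
      (e.isAssociatedPrime_iff.mpr (isAssociatedPrime_ker_lsmul hp hmem.1))

end AssociatedPrime

/-! ### Change of rings for Tor -/

/-- Existence of a bijective additive map between modules over the two ends of a ring homomorphism
`φ`, semilinear along `φ`. As `φ` need not be invertible, a semilinear `LinearEquiv` is not
available. -/
def SemilinearlyEquivalent {S T : Type*} [CommRing S] [CommRing T] (φ : S →+* T) (A B : Type*)
    [AddCommGroup A] [AddCommGroup B] [Module S A] [Module T B] : Prop :=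
  ∃ e : A →ₛₗ[φ] B, Function.Bijective e

namespace SemilinearlyEquivalent

variable {S T U : Type*} [CommRing S] [CommRing T] [CommRing U] {φ : S →+* T} {ψ : T →+* U}
  {A A' B B' C : Type*} [AddCommGroup A] [AddCommGroup B] [Module S A] [Module T B]
  [AddCommGroup A'] [AddCommGroup B'] [Module S A'] [Module T B'] [AddCommGroup C] [Module U C]

lemma of_linearEquiv_mem_iff [Algebra S T] [Module S B] [IsScalarTower S T B] (e : A ≃ₗ[S] B)
    {P : Submodule S A} {P' : Submodule T B} (h : ∀ a, e a ∈ P' ↔ a ∈ P) :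
    SemilinearlyEquivalent (algebraMap S T) P P' := by
  let e' : P →ₛₗ[algebraMap S T] P' :=
    { toFun a := ⟨e a, (h a).mpr a.2⟩
      map_add' a b := Subtype.ext (by simp)
      map_smul' s a := Subtype.ext (by simp) }
  refine ⟨e', fun a b hab ↦ ?_, fun b ↦ ?_⟩
  · exact Subtype.ext (e.injective congr(($hab : B)))
  · exact ⟨⟨e.symm b, (h _).mp (by simp)⟩, Subtype.ext (e.apply_symm_apply b)⟩

lemma congr (h : SemilinearlyEquivalent φ A B) (eA : A' ≃ₗ[S] A) (eB : B ≃ₗ[T] B') :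
    SemilinearlyEquivalent φ A' B' := by
  obtain ⟨e, he⟩ := h
  exact ⟨eB.toLinearMap ∘ₛₗ e ∘ₛₗ eA.toLinearMap,
    (eB.bijective.comp he).comp eA.bijective⟩

lemma trans (h : SemilinearlyEquivalent φ A B) (h' : SemilinearlyEquivalent ψ B C) :
    SemilinearlyEquivalent (ψ.comp φ) A C := by
  obtain ⟨e, he⟩ := h
  obtain ⟨e', he'⟩ := h'
  have : RingHomCompTriple φ ψ (ψ.comp φ) := ⟨rfl⟩
  exact ⟨e'.comp e, he'.comp he⟩

lemma subsingleton (h : SemilinearlyEquivalent φ A B) [Subsingleton B] : Subsingleton A :=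
  h.choose_spec.injective.subsingleton

lemma isAssociatedPrime_comap (h : SemilinearlyEquivalent φ A B) {p : Ideal T}
    (hp : IsAssociatedPrime p B) : IsAssociatedPrime (p.comap φ) A := by
  obtain ⟨e, he⟩ := h
  obtain ⟨hprime, b, rfl⟩ := hp
  obtain ⟨a, rfl⟩ := he.surjective b
  refine ⟨hprime.comap φ, a, ?_⟩
  rw [Ideal.comap_radical]
  congr 1
  ext s
  simp only [Ideal.mem_comap, Submodule.mem_colon_singleton, Submodule.mem_bot]
  rw [← map_smulₛₗ, map_eq_zero_iff e he.injective]

end SemilinearlyEquivalent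

lemma exists_free_surjective_linearMap (S : Type u) [CommRing S] (Z : Type u) [AddCommGroup Z]
    [Module S Z] : ∃ (F : Type u) (_ : AddCommGroup F) (_ : Module S F) (g : F →ₗ[S] Z),
      Module.Free S F ∧ Function.Surjective g :=
  ⟨Z →₀ S, _, _, Finsupp.linearCombination S id, inferInstance,
    Finsupp.linearCombination_id_surjective S Z⟩

section BaseChange

variable {S T : Type u} [CommRing S] [CommRing T] [Algebra S T]
  (N : Type u) [AddCommGroup N] [Module S N] [Module T N] [IsScalarTower S T N]

section KerRTensor

variable {K K' F F' : Type u} [AddCommGroup K] [Module S K] [AddCommGroup K'] [Module S K']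
  [Module T K'] [IsScalarTower S T K'] [AddCommGroup F] [Module S F] [AddCommGroup F'] [Module S F']
  [Module T F'] [IsScalarTower S T F'] {k : K →ₗ[S] K'} (hk : IsBaseChange T k)
  {j : F →ₗ[S] F'} (hj : IsBaseChange T j)

/-- Tensoring an `S`-module with a `T`-module `N` gives the same as tensoring its base change
with `N`. -/
noncomputable def rTensorEquivOfIsBaseChange : K ⊗[S] N ≃ₗ[S] K' ⊗[T] N :=
  TensorProduct.comm S K N ≪≫ₗ
    ((TensorProduct.AlgebraTensorModule.cancelBaseChange S T T N K).symm ≪≫ₗ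
      TensorProduct.comm T N (T ⊗[S] K) ≪≫ₗ hk.equiv.rTensor N).restrictScalars S

@[simp]
lemma rTensorEquivOfIsBaseChange_tmul (y : K) (n : N) :
    rTensorEquivOfIsBaseChange N hk (y ⊗ₜ n) = k y ⊗ₜ n := by
  simp [rTensorEquivOfIsBaseChange, hk.equiv_tmul]

include hk hj in
lemma semilinearlyEquivalent_ker_rTensor {f : K →ₗ[S] F} {f' : K' →ₗ[T] F'}
    (hf : ∀ y, f' (k y) = j (f y)) :
    SemilinearlyEquivalent (algebraMap S T) (LinearMap.ker (f.rTensor N))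
      (LinearMap.ker (f'.rTensor N)) := by
  set eK := rTensorEquivOfIsBaseChange N hk
  set eF := rTensorEquivOfIsBaseChange N hj
  have hnat (t : K ⊗[S] N) : eF (f.rTensor N t) = f'.rTensor N (eK t) := by
    induction t with
    | zero => simp
    | add a b ha hb => simp [ha, hb]
    | tmul y n => simp [eK, eF, hf]
  exact .of_linearEquiv_mem_iff eK fun t ↦ by
    rw [LinearMap.mem_ker, LinearMap.mem_ker, ← hnat, LinearEquiv.map_eq_zero_iff]

end KerRTensor

section TorOne

variable {A A' B B' C C' : Type u} [AddCommGroup A] [Module S A] [AddCommGroup B] [Module S B]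
  [AddCommGroup C] [Module S C] {f : A →ₗ[S] B} {g : B →ₗ[S] C} (hfg : Function.Exact f g)
  (hf : Function.Injective f) (hg : Function.Surjective g) [Module.Flat S B]
include hfg hf hg

lemma baseChange_injective_of_subsingleton_torModule_one [Subsingleton (TorModule S 1 C T)] :
    Function.Injective (f.baseChange T) := by
  obtain ⟨e⟩ := nonempty_torModule_one_linearEquiv_ker_rTensor T hfg hf hg
  have hker : Subsingleton (LinearMap.ker (f.rTensor T)) := e.symm.subsingleton
  exact (LinearMap.lTensor_inj_iff_rTensor_inj T f).mpr
    (LinearMap.ker_eq_bot.mp (Submodule.subsingleton_iff_eq_bot.mp hker))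

variable [AddCommGroup A'] [Module S A'] [Module T A'] [IsScalarTower S T A'] [AddCommGroup B']
  [Module S B'] [Module T B'] [IsScalarTower S T B'] [AddCommGroup C'] [Module T C']
  {f' : A' →ₗ[T] B'} {g' : B' →ₗ[T] C'} (hfg' : Function.Exact f' g')
  (hf' : Function.Injective f') (hg' : Function.Surjective g') [Module.Flat T B']
  {a : A →ₗ[S] A'} (ha : IsBaseChange T a) {b : B →ₗ[S] B'} (hb : IsBaseChange T b)
include hfg' hf' hg' ha hb

lemma semilinearlyEquivalent_torModule_one (hcomm : ∀ y, f' (a y) = b (f y)) :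
    SemilinearlyEquivalent (algebraMap S T) (TorModule S 1 C N) (TorModule T 1 C' N) := by
  obtain ⟨e⟩ := nonempty_torModule_one_linearEquiv_ker_rTensor N hfg hf hg
  obtain ⟨e'⟩ := nonempty_torModule_one_linearEquiv_ker_rTensor N hfg' hf' hg'
  exact (semilinearlyEquivalent_ker_rTensor N ha hb hcomm).congr e e'.symm

end TorOne

lemma semilinearlyEquivalent_torModule_one_baseChange (Z : Type u) [AddCommGroup Z] [Module S Z]
    [Subsingleton (TorModule S 1 Z T)] :
    SemilinearlyEquivalent (algebraMap S T) (TorModule S 1 Z N) (TorModule T 1 (T ⊗[S] Z) N) := by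
  obtain ⟨F, _, _, g, _, hg⟩ := exists_free_surjective_linearMap S Z
  have hinj := (LinearMap.ker g).subtype_injective
  have hinj' := baseChange_injective_of_subsingleton_torModule_one (T := T)
    g.exact_subtype_ker_map hinj hg
  exact semilinearlyEquivalent_torModule_one N g.exact_subtype_ker_map hinj hg
    (f' := (LinearMap.ker g).subtype.baseChange T) (g' := g.baseChange T)
    (lTensor_exact T g.exact_subtype_ker_map hg) hinj' (LinearMap.lTensor_surjective T hg)
    (TensorProduct.isBaseChange S (LinearMap.ker g) T) (TensorProduct.isBaseChange S F T)
    fun y ↦ LinearMap.baseChange_tmul _ _ _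

lemma semilinearlyEquivalent_torModule_baseChange (i : ℕ) (Z : Type u) [AddCommGroup Z]
    [Module S Z] (hZ : ∀ j, Subsingleton (TorModule S (j + 1) Z T)) :
    SemilinearlyEquivalent (algebraMap S T) (TorModule S (i + 1) Z N)
      (TorModule T (i + 1) (T ⊗[S] Z) N) := by
  induction i generalizing Z with
  | zero =>
    have := hZ 0
    exact semilinearlyEquivalent_torModule_one_baseChange N Z
  | succ i ih =>
    obtain ⟨F, _, _, g, _, hg⟩ := exists_free_surjective_linearMap S Z
    have hinj := (LinearMap.ker g).subtype_injective
    have := hZ 0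
    have hinj' := baseChange_injective_of_subsingleton_torModule_one (T := T)
      g.exact_subtype_ker_map hinj hg
    obtain ⟨e⟩ := nonempty_torModule_add_two_linearEquiv_ker N hg i
    obtain ⟨e'⟩ := nonempty_torModule_add_two_linearEquiv N (g := g.baseChange T)
      (lTensor_exact T g.exact_subtype_ker_map hg) hinj' (LinearMap.lTensor_surjective T hg) i
    refine (ih (LinearMap.ker g) fun j ↦ ?_).congr e e'.symm
    obtain ⟨e''⟩ := nonempty_torModule_add_two_linearEquiv_ker T hg j
    have := hZ (j + 1)
    exact e''.symm.subsingleton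

end BaseChange

section QuotientByRegularElement

variable {S : Type u} [CommRing S] {x : S}

lemma one_tmul_eq_zero_iff_exists_eq_smul {Z : Type*} [AddCommGroup Z] [Module S Z] {z : Z} :
    (1 : S ⧸ Ideal.span {x}) ⊗ₜ[S] z = 0 ↔ ∃ w : Z, z = x • w := by
  rw [← TensorProduct.mk_apply, ← LinearMap.mem_ker, LinearMap.ker_tensorProductMk,
    Submodule.ideal_span_singleton_smul, Submodule.mem_smul_pointwise_iff_exists]
  simp [eq_comm]

lemma exists_one_tmul_eq {I : Ideal S} {Z : Type*} [AddCommGroup Z] [Module S Z]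
    (t : (S ⧸ I) ⊗[S] Z) : ∃ z : Z, 1 ⊗ₜ z = t :=
  TensorProduct.mk_surjective S Z (S ⧸ I) Ideal.Quotient.mk_surjective t

lemma lTensor_subtype_ker_injective_of_isSMulRegular {F Z : Type*} [AddCommGroup F] [Module S F]
    [AddCommGroup Z] [Module S Z] (g : F →ₗ[S] Z) (hZ : IsSMulRegular Z x) :
    Function.Injective ((LinearMap.ker g).subtype.lTensor (S ⧸ Ideal.span {x})) := by
  rw [injective_iff_map_eq_zero]
  intro t ht
  obtain ⟨k, rfl⟩ := exists_one_tmul_eq t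
  obtain ⟨w, hw⟩ := one_tmul_eq_zero_iff_exists_eq_smul.mp ht
  have hgw : g w = 0 := hZ.right_eq_zero_of_smul (by rw [← map_smul, ← hw]; exact k.2)
  exact one_tmul_eq_zero_iff_exists_eq_smul.mpr ⟨⟨w, hgw⟩, Subtype.ext hw⟩

lemma subsingleton_torModule_succ_quotient_span_singleton (hx : IsSMulRegular S x) (j : ℕ)
    {Z : Type u} [AddCommGroup Z] [Module S Z] (hZ : IsSMulRegular Z x) :
    Subsingleton (TorModule S (j + 1) Z (S ⧸ Ideal.span {x})) := by
  induction j generalizing Z with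
  | zero =>
    obtain ⟨F, _, _, g, _, hg⟩ := exists_free_surjective_linearMap S Z
    obtain ⟨e⟩ := nonempty_torModule_one_linearEquiv_ker_rTensor_subtype
      (S ⧸ Ideal.span {x}) hg
    have hinj := (LinearMap.lTensor_inj_iff_rTensor_inj _ _).mp
      (lTensor_subtype_ker_injective_of_isSMulRegular g hZ)
    have := Submodule.subsingleton_iff_eq_bot.mpr (LinearMap.ker_eq_bot.mpr hinj)
    exact e.subsingleton
  | succ j ih =>
    obtain ⟨F, _, _, g, _, hg⟩ := exists_free_surjective_linearMap S Z
    obtain ⟨e⟩ := nonempty_torModule_add_two_linearEquiv_ker (S ⧸ Ideal.span {x}) hg j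
    have hF : IsSMulRegular F x :=
      Module.Flat.isSMulRegular_of_isRegular (isLeftRegular_iff_isRegular.mp hx)
    have := ih (hF.submodule (LinearMap.ker g) x)
    exact e.subsingleton

end QuotientByRegularElement

section Syzygy

lemma baseChange_subtype_ker_exact_liftBaseChange {S : Type*} [CommRing S] {I : Ideal S}
    {M P : Type*} [AddCommGroup M] [Module S M] [Module (S ⧸ I) M] [IsScalarTower S (S ⧸ I) M]
    [AddCommGroup P] [Module S P] (g : P →ₗ[S] M) :
    Function.Exact ((LinearMap.ker g).subtype.baseChange (S ⧸ I)) (g.liftBaseChange (S ⧸ I)) := by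
  refine fun y ↦ ⟨fun hy ↦ ?_, ?_⟩
  · obtain ⟨p, rfl⟩ := exists_one_tmul_eq y
    exact ⟨1 ⊗ₜ ⟨p, by simpa using hy⟩, by simp⟩
  · rintro ⟨t, rfl⟩
    obtain ⟨z, rfl⟩ := exists_one_tmul_eq t
    simp

variable {S : Type*} [CommRing S] {x : S} {M P : Type*} [AddCommGroup M] [Module S M]
  [Module (S ⧸ Ideal.span {x}) M] [IsScalarTower S (S ⧸ Ideal.span {x}) M]
  [AddCommGroup P] [Module S P]

lemma smul_mem_ker_of_module_quotient_span_singleton (g : P →ₗ[S] M) (p : P) :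
    x • p ∈ LinearMap.ker g := by
  rw [LinearMap.mem_ker, map_smul, ← algebraMap_smul (S ⧸ Ideal.span {x}),
    Ideal.Quotient.algebraMap_eq, Ideal.Quotient.mk_singleton_self, zero_smul]

variable {g : P →ₗ[S] M} (hg : Function.Surjective g)
include hg

lemma exists_linearMap_apply_eq_one_tmul_of_eq_smul :
    ∃ j : M →ₗ[S ⧸ Ideal.span {x}] (S ⧸ Ideal.span {x}) ⊗[S] LinearMap.ker g,
      ∀ p (z : LinearMap.ker g), (z : P) = x • p → j (g p) = 1 ⊗ₜ z := by
  let φ : P →ₗ[S] LinearMap.ker g := LinearMap.codRestrict _ (LinearMap.lsmul S P x)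
    (smul_mem_ker_of_module_quotient_span_singleton g)
  have hφ : LinearMap.ker g ≤
      LinearMap.ker (TensorProduct.mk S (S ⧸ Ideal.span {x}) (LinearMap.ker g) 1 ∘ₗ φ) :=
    fun z hz ↦ one_tmul_eq_zero_iff_exists_eq_smul.mpr ⟨⟨z, hz⟩, rfl⟩
  refine ⟨LinearMap.extendScalarsOfSurjective Ideal.Quotient.mk_surjective
    ((LinearMap.ker g).liftQ _ hφ ∘ₗ (g.quotKerEquivOfSurjective hg).symm.toLinearMap),
    fun p z hz ↦ ?_⟩
  obtain rfl : z = φ p := Subtype.ext hz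
  simp

-- Multiplication by `x` on `P` factors through a map `M → K ⧸ x K`, where `K` is the kernel of
-- `g`; it identifies `M` with `x P ⧸ x K`.
lemma exists_injective_exact_subtype_ker_baseChange (hP : IsSMulRegular P x) :
    ∃ j : M →ₗ[S ⧸ Ideal.span {x}] (S ⧸ Ideal.span {x}) ⊗[S] LinearMap.ker g,
      Function.Injective j ∧
        Function.Exact j ((LinearMap.ker g).subtype.baseChange (S ⧸ Ideal.span {x})) := by
  obtain ⟨j, hj⟩ := exists_linearMap_apply_eq_one_tmul_of_eq_smul (x := x) hg
  have hker := smul_mem_ker_of_module_quotient_span_singleton (x := x) g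
  refine ⟨j, (injective_iff_map_eq_zero j).mpr fun m hm ↦ ?_, fun t ↦ ⟨fun ht ↦ ?_, ?_⟩⟩
  · obtain ⟨p, rfl⟩ := hg m
    rw [hj p ⟨x • p, hker p⟩ rfl, one_tmul_eq_zero_iff_exists_eq_smul] at hm
    obtain ⟨w, hw⟩ := hm
    obtain rfl : p = w := hP congr(($hw : P))
    exact w.2
  · obtain ⟨z, rfl⟩ := exists_one_tmul_eq t
    obtain ⟨p, hp⟩ := one_tmul_eq_zero_iff_exists_eq_smul.mp
      (by simpa using ht : (1 : S ⧸ Ideal.span {x}) ⊗ₜ[S] (z : P) = 0)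
    exact ⟨g p, hj p z hp⟩
  · rintro ⟨m, rfl⟩
    obtain ⟨p, rfl⟩ := hg m
    rw [hj p ⟨x • p, hker p⟩ rfl]
    exact one_tmul_eq_zero_iff_exists_eq_smul.mpr ⟨p, rfl⟩

end Syzygy

section FourTermExact

variable {T : Type u} [CommRing T] {A B F C : Type u} [AddCommGroup A] [Module T A]
  [AddCommGroup B] [Module T B] [AddCommGroup F] [Module T F] [AddCommGroup C] [Module T C]
  (N : Type u) [AddCommGroup N] [Module T N] {j : A →ₗ[T] B} {b : B →ₗ[T] F} {g : F →ₗ[T] C}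
  (hj : Function.Injective j) (hjb : Function.Exact j b) (hbg : Function.Exact b g)
  (hg : Function.Surjective g)

include hbg hg in
lemma nonempty_torModule_add_two_linearEquiv_range [Module.Flat T F] (i : ℕ) :
    Nonempty (TorModule T (i + 2) C N ≃ₗ[T] TorModule T (i + 1) (LinearMap.range b) N) := by
  rw [LinearMap.exact_iff, ← Submodule.range_subtype (LinearMap.range b),
    ← LinearMap.exact_iff] at hbg
  exact nonempty_torModule_add_two_linearEquiv N hbg (LinearMap.range b).subtype_injective hg i

include hjb in
lemma exact_rangeRestrict : Function.Exact j b.rangeRestrict := by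
  rwa [LinearMap.exact_iff, LinearMap.ker_rangeRestrict, ← LinearMap.exact_iff]

include hj hjb hbg hg

lemma subsingleton_torModule_of_exact_of_flat [Module.Flat T F] (i : ℕ)
    [Subsingleton (TorModule T (i + 1) A N)] [Subsingleton (TorModule T (i + 2) C N)] :
    Subsingleton (TorModule T (i + 1) B N) := by
  obtain ⟨e⟩ := nonempty_torModule_add_two_linearEquiv_range N hbg hg i
  have := e.symm.subsingleton
  exact subsingleton_of_exact
    (torMap_exact N (exact_rangeRestrict hjb) hj b.surjective_rangeRestrict (i + 1))

lemma nonempty_torModule_linearEquiv_of_exact_of_flat [Module.Flat T F] (i : ℕ)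
    [Subsingleton (TorModule T (i + 2) C N)] [Subsingleton (TorModule T (i + 3) C N)] :
    Nonempty (TorModule T (i + 1) A N ≃ₗ[T] TorModule T (i + 1) B N) := by
  obtain ⟨e⟩ := nonempty_torModule_add_two_linearEquiv_range N hbg hg i
  obtain ⟨e'⟩ := nonempty_torModule_add_two_linearEquiv_range N hbg hg (i + 1)
  have := e.symm.subsingleton
  have := e'.symm.subsingleton
  exact nonempty_torModule_linearEquiv_of_subsingleton N (exact_rangeRestrict hjb) hj
    b.surjective_rangeRestrict (i + 1)

end FourTermExact

section QuotientByRegularElement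

variable {S : Type u} [CommRing S] {x : S} (hx : IsSMulRegular S x) (M N : Type u)
  [AddCommGroup M] [Module S M] [AddCommGroup N] [Module S N] [Module (S ⧸ Ideal.span {x}) N]
  [IsScalarTower S (S ⧸ Ideal.span {x}) N]
include hx

lemma semilinearlyEquivalent_torModule_add_two_ker {P : Type u} [AddCommGroup P] [Module S P]
    [Module.Free S P] {g : P →ₗ[S] M} (hg : Function.Surjective g) (i : ℕ) :
    SemilinearlyEquivalent (algebraMap S (S ⧸ Ideal.span {x})) (TorModule S (i + 2) M N)
      (TorModule (S ⧸ Ideal.span {x}) (i + 1) ((S ⧸ Ideal.span {x}) ⊗[S] LinearMap.ker g) N) := by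
  have hP : IsSMulRegular P x :=
    Module.Flat.isSMulRegular_of_isRegular (isLeftRegular_iff_isRegular.mp hx)
  obtain ⟨e⟩ := nonempty_torModule_add_two_linearEquiv_ker N hg i
  exact (semilinearlyEquivalent_torModule_baseChange N i (LinearMap.ker g) fun j ↦
    subsingleton_torModule_succ_quotient_span_singleton hx j (hP.submodule _ x)).congr e
      (LinearEquiv.refl _ _)

variable [Module (S ⧸ Ideal.span {x}) M] [IsScalarTower S (S ⧸ Ideal.span {x}) M]

-- The exact sequence `0 → M → K ⧸ x K → P ⧸ x P → M → 0`, with `K` the first syzygy of `M` over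
-- `S`, identifies the top `Tor` over `S ⧸ (x)` of `M` with that of `K ⧸ x K`.
theorem torModule_quotient_span_singleton_change_of_rings (q : ℕ)
    (hq : ∀ i, q + 1 < i → Subsingleton (TorModule (S ⧸ Ideal.span {x}) i M N)) :
    (∀ i, q + 2 < i → Subsingleton (TorModule S i M N)) ∧
      SemilinearlyEquivalent (algebraMap S (S ⧸ Ideal.span {x})) (TorModule S (q + 2) M N)
        (TorModule (S ⧸ Ideal.span {x}) (q + 1) M N) := by
  obtain ⟨P, _, _, g, _, hg⟩ := exists_free_surjective_linearMap S M
  have hP : IsSMulRegular P x :=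
    Module.Flat.isSMulRegular_of_isRegular (isLeftRegular_iff_isRegular.mp hx)
  obtain ⟨j, hj, hjb⟩ := exists_injective_exact_subtype_ker_baseChange hg hP
  have hbg := baseChange_subtype_ker_exact_liftBaseChange (I := Ideal.span {x}) g
  have hg' : Function.Surjective (g.liftBaseChange (S ⧸ Ideal.span {x})) := fun m ↦ by
    obtain ⟨p, rfl⟩ := hg m
    exact ⟨1 ⊗ₜ p, by simp⟩
  have hequiv := semilinearlyEquivalent_torModule_add_two_ker hx M N hg
  constructor
  · intro i hi
    obtain ⟨i, rfl⟩ := Nat.exists_eq_add_of_le' (show 2 ≤ i by omega)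
    have := hq (i + 1) (by omega)
    have := hq (i + 2) (by omega)
    have := subsingleton_torModule_of_exact_of_flat N hj hjb hbg hg' i
    exact (hequiv i).subsingleton
  · have := hq (q + 2) (by omega)
    have := hq (q + 3) (by omega)
    obtain ⟨e⟩ := nonempty_torModule_linearEquiv_of_exact_of_flat N hj hjb hbg hg' q
    exact (hequiv q).congr (LinearEquiv.refl _ _) e.symm

end QuotientByRegularElement

section QuotientByRegularSequence

/-- A linear equivalence in the first variable induces one on `Tor`. -/
noncomputable def torModuleCongr {R : Type u} [CommRing R] {M M' : Type u} [AddCommGroup M]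
    [Module R M] [AddCommGroup M'] [Module R M'] (N : Type u) [AddCommGroup N] [Module R N] (i : ℕ)
    (e : M ≃ₗ[R] M') : TorModule R i M N ≃ₗ[R] TorModule R i M' N :=
  ((torFunctor (ModuleCat.of R N) i).mapIso e.toModuleIso).toLinearEquiv

variable {S T : Type u} [CommRing S] [CommRing T] [Algebra S T]

lemma semilinearlyEquivalent_torModule_of_isEpi [Module.Projective S T] [Algebra.IsEpi S T]
    (M N : Type u) [AddCommGroup M] [Module S M] [Module T M] [IsScalarTower S T M]
    [AddCommGroup N] [Module S N] [Module T N] [IsScalarTower S T N] (i : ℕ) :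
    SemilinearlyEquivalent (algebraMap S T) (TorModule S (i + 1) M N)
      (TorModule T (i + 1) M N) := by
  have hpd : HasProjectiveDimensionLT (ModuleCat.of S T) 1 :=
    projective_iff_hasProjectiveDimensionLT_one.mp
      ((IsProjective.iff_projective (ModuleCat.of S T)).mp inferInstance)
  exact (semilinearlyEquivalent_torModule_baseChange N i M fun j ↦
    subsingleton_torModule_of_hasProjectiveDimensionLT M T j
      (hasProjectiveDimensionLT_of_ge _ 1 _ (by omega))).congr
    (LinearEquiv.refl _ _) (torModuleCongr N (i + 1) (TensorProduct.lid' S T M))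

lemma semilinearlyEquivalent_torModule_of_bijective (h : Function.Bijective (algebraMap S T))
    (M N : Type u) [AddCommGroup M] [Module S M] [Module T M] [IsScalarTower S T M]
    [AddCommGroup N] [Module S N] [Module T N] [IsScalarTower S T N] (i : ℕ) :
    SemilinearlyEquivalent (algebraMap S T) (TorModule S (i + 1) M N)
      (TorModule T (i + 1) M N) :=
  have : Module.Projective S T := .of_equiv (LinearEquiv.ofBijective (Algebra.linearMap S T) h)
  have : Algebra.IsEpi S T := Algebra.isEpi_of_surjective_algebraMap S T h.surjective
  semilinearlyEquivalent_torModule_of_isEpi M N i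

lemma ker_algebraMap_quotient_span_singleton_eq_ofList {x : S} {f : List S}
    [Algebra (S ⧸ Ideal.span {x}) T] [IsScalarTower S (S ⧸ Ideal.span {x}) T]
    (hker : RingHom.ker (algebraMap S T) = Ideal.ofList (x :: f)) :
    RingHom.ker (algebraMap (S ⧸ Ideal.span {x}) T) =
      Ideal.ofList (f.map (algebraMap S (S ⧸ Ideal.span {x}))) := by
  have hsurj : Function.Surjective (algebraMap S (S ⧸ Ideal.span {x})) :=
    Ideal.Quotient.mk_surjective
  apply Ideal.comap_injective_of_surjective _ hsurj
  rw [RingHom.comap_ker, ← IsScalarTower.algebraMap_eq, hker, ← Ideal.map_ofList,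
    Ideal.comap_map_of_surjective' _ hsurj, Ideal.Quotient.algebraMap_eq, Ideal.mk_ker,
    Ideal.ofList_cons, sup_comm]

lemma isWeaklyRegular_map_algebraMap_quotient_span_singleton {x : S} {f : List S}
    (hf : IsWeaklyRegular (QuotSMulTop x S) f) :
    IsWeaklyRegular (S ⧸ Ideal.span {x}) (f.map (algebraMap S (S ⧸ Ideal.span {x}))) :=
  (isWeaklyRegular_map_algebraMap_iff _ _ _).mpr
    (((quotSMulTopSelfEquiv x).isWeaklyRegular_congr _).mp hf)

theorem torModule_change_of_rings_of_isWeaklyRegular (hsurj : Function.Surjective (algebraMap S T))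
    {f : List S} (hker : RingHom.ker (algebraMap S T) = Ideal.ofList f)
    (hf : IsWeaklyRegular S f) (M N : Type u)
    [AddCommGroup M] [Module S M] [Module T M] [IsScalarTower S T M]
    [AddCommGroup N] [Module S N] [Module T N] [IsScalarTower S T N] (q : ℕ)
    (hq : ∀ i, q + 1 < i → Subsingleton (TorModule T i M N)) :
    (∀ i, q + f.length + 1 < i → Subsingleton (TorModule S i M N)) ∧
      SemilinearlyEquivalent (algebraMap S T) (TorModule S (q + f.length + 1) M N)
        (TorModule T (q + 1) M N) := by
  induction hc : f.length generalizing S f with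
  | zero =>
    obtain rfl := List.length_eq_zero_iff.mp hc
    have hbij : Function.Bijective (algebraMap S T) :=
      ⟨(RingHom.injective_iff_ker_eq_bot _).mpr (by simpa using hker), hsurj⟩
    have hequiv := semilinearlyEquivalent_torModule_of_bijective hbij M N
    refine ⟨fun i hi ↦ ?_, hequiv q⟩
    obtain ⟨i, rfl⟩ := Nat.exists_eq_add_of_le' (show 1 ≤ i by omega)
    have := hq (i + 1) (by omega)
    exact (hequiv i).subsingleton
  | succ c ih =>
    obtain ⟨x, f, rfl⟩ := List.exists_cons_of_length_eq_add_one hc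
    rw [isWeaklyRegular_cons_iff] at hf
    have hx : Ideal.span {x} ≤ RingHom.ker (algebraMap S T) := by
      rw [hker, Ideal.ofList_cons]
      exact le_sup_left
    let φ : S ⧸ Ideal.span {x} →+* T := Ideal.Quotient.lift _ (algebraMap S T) fun s hs ↦ hx hs
    let _ : Algebra (S ⧸ Ideal.span {x}) T := φ.toAlgebra
    let _ : Module (S ⧸ Ideal.span {x}) M := Module.compHom M φ
    let _ : Module (S ⧸ Ideal.span {x}) N := Module.compHom N φ
    have : IsScalarTower (S ⧸ Ideal.span {x}) T M := .of_algebraMap_smul fun _ _ ↦ rfl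
    have : IsScalarTower (S ⧸ Ideal.span {x}) T N := .of_algebraMap_smul fun _ _ ↦ rfl
    have : IsScalarTower S (S ⧸ Ideal.span {x}) M :=
      .of_algebraMap_smul fun r _ ↦ algebraMap_smul T r _
    have : IsScalarTower S (S ⧸ Ideal.span {x}) N :=
      .of_algebraMap_smul fun r _ ↦ algebraMap_smul T r _
    have : IsScalarTower S (S ⧸ Ideal.span {x}) T := .of_algebraMap_eq fun _ ↦ rfl
    obtain ⟨hvan, hequiv⟩ := ih (Ideal.Quotient.lift_surjective_of_surjective _ _ hsurj)
      (ker_algebraMap_quotient_span_singleton_eq_ofList hker)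
      (isWeaklyRegular_map_algebraMap_quotient_span_singleton hf.2) (by simpa using hc)
    obtain ⟨hvan', hequiv'⟩ :=
      torModule_quotient_span_singleton_change_of_rings hf.1 M N (q + c) hvan
    refine ⟨hvan', ?_⟩
    rw [IsScalarTower.algebraMap_eq S (S ⧸ Ideal.span {x}) T]
    exact hequiv'.trans hequiv

end QuotientByRegularSequence

section Annihilator

variable {R : Type u} [CommRing R] {M N : Type u} [AddCommGroup M] [Module R M] [AddCommGroup N]
  [Module R N]

lemma annihilator_le_annihilator_torModule_left (i : ℕ) :
    Module.annihilator R M ≤ Module.annihilator R (TorModule R i M N) := by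
  intro r hr
  rw [Module.mem_annihilator] at hr ⊢
  have hlsmul : LinearMap.lsmul R M r = LinearMap.lsmul R M 0 := by
    ext m
    simp [hr m]
  intro t
  have htor := torMap_lsmul (M := M) N i r
  rw [hlsmul, torMap_lsmul] at htor
  exact congr($htor.symm t).trans (zero_smul R t)

lemma annihilator_le_annihilator_tensorProduct_right :
    Module.annihilator R N ≤ Module.annihilator R (M ⊗[R] N) := by
  intro r hr
  rw [Module.mem_annihilator] at hr ⊢
  intro t
  induction t with
  | zero => rw [smul_zero]
  | tmul m n => rw [← TensorProduct.tmul_smul, hr, TensorProduct.tmul_zero]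
  | add a b ha hb => rw [smul_add, ha, hb, add_zero]

lemma annihilator_le_annihilator_torModule_succ_right (i : ℕ) :
    Module.annihilator R N ≤ Module.annihilator R (TorModule R (i + 1) M N) := by
  induction i generalizing M with
  | zero =>
    obtain ⟨F, _, _, g, _, hg⟩ := exists_free_surjective_linearMap R M
    obtain ⟨e⟩ := nonempty_torModule_one_linearEquiv_ker_rTensor_subtype N hg
    rw [e.annihilator_eq]
    exact annihilator_le_annihilator_tensorProduct_right.trans
      (LinearMap.annihilator_le_of_injective _ (Submodule.subtype_injective _))
  | succ i ih =>
    obtain ⟨F, _, _, g, _, hg⟩ := exists_free_surjective_linearMap R M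
    obtain ⟨e⟩ := nonempty_torModule_add_two_linearEquiv_ker N hg i
    rw [e.annihilator_eq]
    exact ih

lemma support_inter_support_subset_support_tensorProduct [Module.Finite R M] [Module.Finite R N] :
    Module.support R M ∩ Module.support R N ⊆ Module.support R (M ⊗[R] N) := by
  rintro p ⟨hM, hN⟩
  rw [Module.mem_support_iff_nontrivial_residueField_tensorProduct] at hM hN ⊢
  rw [(TensorProduct.AlgebraTensorModule.distribBaseChange R
    p.asIdeal.ResidueField M N).nontrivial_congr]
  infer_instance

lemma annihilator_tensorProduct_le_of_isAssociatedPrime_torModule_succ [Module.Finite R M]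
    [Module.Finite R N] {i : ℕ} {p : Ideal R}
    (hp : IsAssociatedPrime p (TorModule R (i + 1) M N)) :
    Module.annihilator R (M ⊗[R] N) ≤ p := by
  let P : PrimeSpectrum R := ⟨p, hp.isPrime⟩
  have hann : Module.annihilator R (TorModule R (i + 1) M N) ≤ p :=
    Submodule.annihilator_top.symm.le.trans hp.annihilator_le
  have hP : P ∈ Module.support R (M ⊗[R] N) :=
    support_inter_support_subset_support_tensorProduct
      ⟨Module.mem_support_iff_of_finite.mpr
        ((annihilator_le_annihilator_torModule_left _).trans hann),
      Module.mem_support_iff_of_finite.mpr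
        ((annihilator_le_annihilator_torModule_succ_right _).trans hann)⟩
  exact Module.mem_support_iff_of_finite.mp hP

end Annihilator

/-! ### The top nonvanishing Tor over a complete intersection -/

lemma moduleDepth_le_moduleDepth_of_surjective {Q R : Type u} [CommRing Q] [IsLocalRing Q]
    [CommRing R] [IsLocalRing R] [Algebra Q R] (hsurj : Function.Surjective (algebraMap Q R))
    (M : Type u) [AddCommGroup M] [Module R M] [Module Q M] [IsScalarTower Q R M] [Nontrivial M]
    [Module.Finite Q M] : moduleDepth R M ≤ moduleDepth Q M := by
  refine sSup_le ?_
  rintro _ ⟨rs, rfl, hmem, hrs⟩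
  obtain ⟨rs', rfl⟩ := List.map_surjective_iff.mpr hsurj rs
  have : IsLocalHom (algebraMap Q R) := .of_surjective _ hsurj
  have hmem' : ∀ r ∈ rs', r ∈ maximalIdeal Q := fun r hr ↦ by
    simpa using hmem _ (List.mem_map_of_mem hr)
  refine le_sSup ⟨rs', by simp, hmem', ?_⟩
  rw [IsLocalRing.isRegular_iff_isWeaklyRegular_of_subset_maximalIdeal hmem',
    ← isWeaklyRegular_map_algebraMap_iff R M rs']
  exact hrs.toIsWeaklyRegular

-- A regular sequence on `M` inside `p` of length `l = depth M - dim Q ⧸ p` produces a nonzero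
-- `Tor` of `N` in degree `s + l`, which is at most the projective dimension `dim Q - depth N`.
theorem IsRegularLocal.add_moduleDepth_add_moduleDepth_le {Q : Type u} [CommRing Q]
    [IsLocalRing Q] (hQ : IsRegularLocal Q) {M N : Type u} [AddCommGroup M] [Module Q M]
    [AddCommGroup N] [Module Q N] [Module.Finite Q M] [Module.Finite Q N] [Nontrivial M]
    [Nontrivial N] {s : ℕ} (hs : ∀ i, s < i → Subsingleton (TorModule Q i M N)) {p : Ideal Q}
    (hp : IsAssociatedPrime p (TorModule Q s M N)) :
    ((s + moduleDepth Q M + moduleDepth Q N : ℕ∞) : WithBot ℕ∞) ≤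
      ringKrullDim Q + ringKrullDim (Q ⧸ p) := by
  have := hQ.1
  have := hp.isPrime
  have : IsLocalRing (Q ⧸ p) := .of_surjective' (Ideal.Quotient.mk p) Ideal.Quotient.mk_surjective
  obtain ⟨d, hd⟩ := exists_ringKrullDim_eq_natCast Q
  obtain ⟨t, ht⟩ := exists_ringKrullDim_eq_natCast (Q ⧸ p)
  obtain ⟨xs, hdepthM, hxs, hxM⟩ := exists_isRegular_length_eq_moduleDepth (Q := Q) M
  obtain ⟨ys, hdepthN, hys, hyN⟩ := exists_isRegular_length_eq_moduleDepth (Q := Q) N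
  obtain ⟨zs, hlen, hzp, hzM⟩ := exists_isWeaklyRegular_mem_of_ringKrullDim_quotient_le
    hp.isPrime.ne_top ht.le hxM hxs (l := xs.length - t) le_rfl
  obtain ⟨M', _, _, hp'⟩ := exists_isAssociatedPrime_torModule_add_length N hzM hzp hs hp
  have : Nontrivial (TorModule Q (s + zs.length) M' N) := not_subsingleton_iff_nontrivial.mp
    fun _ ↦ not_isAssociatedPrime_of_subsingleton hp'
  have hle : ((s + zs.length : ℕ) : WithBot ℕ∞) + ys.length ≤ d := by
    rw [← hd]
    exact (add_le_add_left (le_projectiveDimension_of_nontrivial_torModule M' N _) _).trans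
      (hQ.projectiveDimension_add_length_le N hyN.toIsWeaklyRegular hys)
  rw [hd, ht, hdepthM, hdepthN]
  norm_cast at hle ⊢
  omega

section CompleteIntersection

variable {Q : Type u} [CommRing Q] [IsLocalRing Q] (hQ : IsRegularLocal Q) {f : List Q}
  (hf : IsRegular Q f) [IsLocalRing (Q ⧸ Ideal.ofList f)] {M N : Type u}
  [AddCommGroup M] [Module (Q ⧸ Ideal.ofList f) M] [Module.Finite (Q ⧸ Ideal.ofList f) M]
  [AddCommGroup N] [Module (Q ⧸ Ideal.ofList f) N] [Module.Finite (Q ⧸ Ideal.ofList f) N]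
  [Nontrivial M] [Nontrivial N]
include hQ hf

theorem add_moduleDepth_add_moduleDepth_le_of_isAssociatedPrime_torModule_succ {q : ℕ}
    (hq : ∀ i, q + 1 < i → Subsingleton (TorModule (Q ⧸ Ideal.ofList f) i M N))
    {p : Ideal (Q ⧸ Ideal.ofList f)}
    (hp : IsAssociatedPrime p (TorModule (Q ⧸ Ideal.ofList f) (q + 1) M N)) :
    (((q + 1 : ℕ) + moduleDepth (Q ⧸ Ideal.ofList f) M + moduleDepth (Q ⧸ Ideal.ofList f) N : ℕ∞) :
      WithBot ℕ∞) ≤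
        ringKrullDim (Q ⧸ Ideal.ofList f) + ringKrullDim ((Q ⧸ Ideal.ofList f) ⧸ p) := by
  have := hQ.1
  let R := Q ⧸ Ideal.ofList f
  have hsurj : Function.Surjective (algebraMap Q R) := Ideal.Quotient.mk_surjective
  let _ : Module Q M := Module.compHom M (algebraMap Q R)
  let _ : Module Q N := Module.compHom N (algebraMap Q R)
  have : IsScalarTower Q R M := .of_algebraMap_smul fun _ _ ↦ rfl
  have : IsScalarTower Q R N := .of_algebraMap_smul fun _ _ ↦ rfl
  have : Module.Finite Q M := .trans R M
  have : Module.Finite Q N := .trans R N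
  obtain ⟨hvan, hequiv⟩ := torModule_change_of_rings_of_isWeaklyRegular hsurj
    Ideal.mk_ker hf.toIsWeaklyRegular M N q hq
  have hQle := hQ.add_moduleDepth_add_moduleDepth_le hvan (hequiv.isAssociatedPrime_comap hp)
  have hdim : ringKrullDim (Q ⧸ p.comap (algebraMap Q R)) = ringKrullDim (R ⧸ p) :=
    ringKrullDim_eq_of_ringEquiv (.ofBijective (Ideal.quotientMap p (algebraMap Q R) le_rfl)
      ⟨Ideal.quotientMap_injective, Ideal.quotientMap_surjective hsurj⟩)
  rw [hdim, ← ringKrullDim_add_length_eq_ringKrullDim_of_isRegular f hf] at hQle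
  rw [← ENat.WithBot.add_le_add_natCast_right_iff (c := f.length), add_right_comm (ringKrullDim R)]
  refine le_trans ?_ hQle
  have hM := moduleDepth_le_moduleDepth_of_surjective hsurj M
  have hN := moduleDepth_le_moduleDepth_of_surjective hsurj N
  have hshift : ((q + 1 : ℕ) + moduleDepth R M + moduleDepth R N + f.length : ℕ∞) =
      (q + f.length + 1 : ℕ) + moduleDepth R M + moduleDepth R N := by
    push_cast
    ring
  rw [← WithBot.coe_natCast, ← WithBot.coe_add, hshift]
  exact WithBot.coe_le_coe.mpr (add_le_add (add_le_add le_rfl hM) hN)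

end CompleteIntersection

lemma isZero_tor_iff_subsingleton_torModule {R : Type u} [CommRing R] (M N : Type u)
    [AddCommGroup M] [Module R M] [AddCommGroup N] [Module R N] (i : ℕ) :
    IsZero (((Tor (ModuleCat.{u} R) i).obj (ModuleCat.of R M)).obj (ModuleCat.of R N)) ↔
      Subsingleton (TorModule R i M N) :=
  (torFunctorObjIso (ModuleCat.of R M) (ModuleCat.of R N) i).isZero_iff.trans
    ⟨fun h ↦ ModuleCat.subsingleton_of_isZero h, fun _ ↦ ModuleCat.isZero_of_subsingleton _⟩

lemma exists_maximal_nontrivial_torModule {R : Type u} [CommRing R] {M N : Type u}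
    [AddCommGroup M] [Module R M] [AddCommGroup N] [Module R N] {n i : ℕ}
    (hn : ∀ j, n ≤ j → Subsingleton (TorModule R j M N)) (hi : Nontrivial (TorModule R i M N)) :
    ∃ k, i ≤ k ∧ Nontrivial (TorModule R k M N) ∧
      ∀ j, k < j → Subsingleton (TorModule R j M N) := by
  have hfin : {j | Nontrivial (TorModule R j M N)}.Finite :=
    (Set.finite_Iio n).subset fun j hj ↦ not_le.mp fun hnj ↦
      not_nontrivial_iff_subsingleton.mpr (hn j hnj) hj
  obtain ⟨k, hik, hk⟩ := hfin.exists_le_maximal hi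
  exact ⟨k, hik, hk.prop, fun j hj ↦ not_nontrivial_iff_subsingleton.mp (hk.not_prop_of_gt hj)⟩

theorem stmt_6_general (Q : Type u) [CommRing Q] [IsLocalRing Q] (hQ : IsRegularLocal Q)
    (f : List Q) (hf : RingTheory.Sequence.IsRegular Q f)
    [IsLocalRing (Q ⧸ Ideal.ofList f)]
    (M N : Type u) [AddCommGroup M] [Module (Q ⧸ Ideal.ofList f) M]
    [AddCommGroup N] [Module (Q ⧸ Ideal.ofList f) N]
    [Module.Finite (Q ⧸ Ideal.ofList f) M] [Module.Finite (Q ⧸ Ideal.ofList f) N]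
    [Nontrivial M] [Nontrivial N] (r : ℕ)
    (htor : ∃ n : ℕ, ∀ i : ℕ, n ≤ i →
      IsZero (((Tor (ModuleCat.{u} (Q ⧸ Ideal.ofList f)) i).obj
        (ModuleCat.of (Q ⧸ Ideal.ofList f) M)).obj (ModuleCat.of (Q ⧸ Ideal.ofList f) N)))
    (hdim : moduleDim (Q ⧸ Ideal.ofList f) (M ⊗[Q ⧸ Ideal.ofList f] N) +
        ringDim (Q ⧸ Ideal.ofList f) ≤
      moduleDepth (Q ⧸ Ideal.ofList f) M + moduleDepth (Q ⧸ Ideal.ofList f) N + r) :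
    ∀ i : ℕ, r < i →
      IsZero (((Tor (ModuleCat.{u} (Q ⧸ Ideal.ofList f)) i).obj
        (ModuleCat.of (Q ⧸ Ideal.ofList f) M)).obj (ModuleCat.of (Q ⧸ Ideal.ofList f) N)) := by
  have := hQ.1
  simp only [isZero_tor_iff_subsingleton_torModule] at htor ⊢
  obtain ⟨n, hn⟩ := htor
  by_contra! hcon
  obtain ⟨i, hri, hi⟩ := hcon
  obtain ⟨k, hik, hk, hmax⟩ := exists_maximal_nontrivial_torModule hn hi
  obtain ⟨q, rfl⟩ := Nat.exists_eq_add_of_le' (show 1 ≤ k by omega)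
  obtain ⟨p, hp⟩ := associatedPrimes.nonempty (Q ⧸ Ideal.ofList f)
    (TorModule (Q ⧸ Ideal.ofList f) (q + 1) M N)
  have hle := add_moduleDepth_add_moduleDepth_le_of_isAssociatedPrime_torModule_succ hQ hf hmax hp
  have hpdim : ringKrullDim ((Q ⧸ Ideal.ofList f) ⧸ p) ≤
      moduleDim (Q ⧸ Ideal.ofList f) (M ⊗[Q ⧸ Ideal.ofList f] N) :=
    ringKrullDim_le_of_surjective _ (Ideal.Quotient.factor_surjective
      (annihilator_tensorProduct_le_of_isAssociatedPrime_torModule_succ hp))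
  obtain ⟨xs, hdepthM, -⟩ := exists_isRegular_length_eq_moduleDepth (Q := Q ⧸ Ideal.ofList f) M
  obtain ⟨ys, hdepthN, -⟩ := exists_isRegular_length_eq_moduleDepth (Q := Q ⧸ Ideal.ofList f) N
  have hfinal := hle.trans ((add_comm _ _).trans_le ((add_le_add_left hpdim _).trans hdim))
  rw [hdepthM, hdepthN] at hfinal
  norm_cast at hfinal
  omega

theorem stmt_6 (Q : Type u) [CommRing Q] [IsLocalRing Q] (hQ : IsRegularLocal Q)
    (f : List Q) (hf : RingTheory.Sequence.IsRegular Q f)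
    [IsLocalRing (Q ⧸ Ideal.ofList f)]
    (M N : Type u) [AddCommGroup M] [Module (Q ⧸ Ideal.ofList f) M]
    [AddCommGroup N] [Module (Q ⧸ Ideal.ofList f) N]
    [Module.Finite (Q ⧸ Ideal.ofList f) M] [Module.Finite (Q ⧸ Ideal.ofList f) N]
    [Nontrivial M] [Nontrivial N]
    (hCM_M : (moduleDepth (Q ⧸ Ideal.ofList f) M : WithBot ℕ∞) =
      moduleDim (Q ⧸ Ideal.ofList f) M)
    (hCM_N : (moduleDepth (Q ⧸ Ideal.ofList f) N : WithBot ℕ∞) =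
      moduleDim (Q ⧸ Ideal.ofList f) N)
    (htor : ∃ n : ℕ, ∀ i : ℕ, n ≤ i →
      IsZero (((Tor (ModuleCat.{u} (Q ⧸ Ideal.ofList f)) i).obj
        (ModuleCat.of (Q ⧸ Ideal.ofList f) M)).obj (ModuleCat.of (Q ⧸ Ideal.ofList f) N)))
    (hdim : moduleDim (Q ⧸ Ideal.ofList f) (M ⊗[Q ⧸ Ideal.ofList f] N) +
        ringDim (Q ⧸ Ideal.ofList f) ≤
      moduleDim (Q ⧸ Ideal.ofList f) M + moduleDim (Q ⧸ Ideal.ofList f) N) :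
    ∀ i : ℕ, 0 < i →
      IsZero (((Tor (ModuleCat.{u} (Q ⧸ Ideal.ofList f)) i).obj
        (ModuleCat.of (Q ⧸ Ideal.ofList f) M)).obj (ModuleCat.of (Q ⧸ Ideal.ofList f) N)) :=
  stmt_6_general Q hQ f hf M N 0 htor (by simpa [hCM_M, hCM_N] using hdim)
end

section
/- Let (R,m) be a Cohen–Macaulay Noetherian local ring and let M and N be nonzero finitely generated Cohen–Macaulay R-modules. If dim(M ⊗_R N) + dim R ≤ dim M + dim N, then there exist elements x₁,…,x_n ∈ ann(N) (possibly n = 0) forming a regular sequence on both M and R such that N is a maximal Cohen–Macaulay module over R/(x₁,…,x_n), i.e., depth N = dim R − n. -/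
/-!
STATEMENT 7: Over a Cohen–Macaulay Noetherian local ring `R`, if `M`, `N` are nonzero finitely
generated Cohen–Macaulay modules with `dim (M ⊗_R N) + dim R ≤ dim M + dim N`, then there is a
sequence `x₁, …, x_n ∈ ann N` (possibly empty), regular on both `M` and `R`, with
`depth N = dim R − n` (stated as `depth N + n = dim R`), i.e. `N` is maximal Cohen–Macaulay
over `R ⧸ (x₁, …, x_n)`.
-/

open scoped TensorProduct

universe u

/-!
By Rees' theorem the number `grade I K`, the common length of the maximal `K`-regular sequences
in `I`, drops by one modulo any `K`-regular element of `I`. Two consequences follow by induction.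

* `depth K ≤ dim (K ⊗ L) + grade (ann L) K`. If `ann L` contains no `K`-regular element, it lies in
  an associated prime `P` of `K`; then `P` is in the support of `K ⊗ L`, so
  `depth K ≤ dim R ⧸ P ≤ dim (K ⊗ L)`. Otherwise divide `K` by a regular element of `ann L`.
* If `I` contains regular sequences of length `n` on `K` and on `L`, it contains one that is
  regular on both, because a single element of `I` can be chosen regular on both.

With `n = dim R - dim N`, the first consequence applies to the pairs `M`, `N` and `R`, `N`, and the
second one to `ann N`.
-/

open IsLocalRing RingTheory.Sequence CategoryTheory Abelian
open scoped Pointwise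

universe v

section SupportDimension

variable {R : Type*} [CommRing R] {K L : Type*} [AddCommGroup K] [Module R K]
  [AddCommGroup L] [Module R L]

theorem support_tensorProduct_eq_inter [Module.Finite R K] [Module.Finite R L] :
    Module.support R (K ⊗[R] L) = Module.support R K ∩ Module.support R L := by
  ext p
  simp only [Set.mem_inter_iff, Module.mem_support_iff_nontrivial_residueField_tensorProduct]
  rw [(TensorProduct.AlgebraTensorModule.distribBaseChange R p.asIdeal.ResidueField
    K L).toEquiv.nontrivial_congr]
  refine ⟨fun h ↦ ⟨?_, ?_⟩, fun ⟨_, _⟩ ↦ inferInstance⟩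
  all_goals
    contrapose! h
    infer_instance

theorem nontrivial_tensorProduct_of_isLocalRing [IsLocalRing R] [Module.Finite R K]
    [Module.Finite R L] [Nontrivial K] [Nontrivial L] : Nontrivial (K ⊗[R] L) := by
  rw [← Module.nonempty_support_iff (R := R), support_tensorProduct_eq_inter]
  exact ⟨closedPoint R, closedPoint_mem_support R K, closedPoint_mem_support R L⟩

theorem ringKrullDim_quotient_le_supportDim_of_mem_support {p : PrimeSpectrum R}
    (hp : p ∈ Module.support R K) : ringKrullDim (R ⧸ p.asIdeal) ≤ Module.supportDim R K := by
  rw [ringKrullDim_quotient]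
  exact Order.krullDim_le_of_strictMono
    (fun q ↦ ⟨q.1, Module.mem_support_mono q.2 hp⟩) fun _ _ h ↦ h

theorem exists_nat_eq_supportDim [IsLocalRing R] [IsNoetherianRing R] [Nontrivial K] :
    ∃ n : ℕ, Module.supportDim R K = n := by
  obtain ⟨d, hd⟩ := WithBot.ne_bot_iff_exists.mp (Module.supportDim_ne_bot_of_nontrivial R K)
  have hd_top : d ≠ ⊤ := by
    rintro rfl
    exact ((Module.supportDim_le_ringKrullDim R K).trans_lt ringKrullDim_lt_top).ne hd.symm
  obtain ⟨n, rfl⟩ := ENat.ne_top_iff_exists.mp hd_top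
  exact ⟨n, hd.symm⟩

theorem ringKrullDim_quotient_succ_le_of_lt {P Q : Ideal R} [P.IsPrime] (h : P < Q) :
    ringKrullDim (R ⧸ Q) + 1 ≤ ringKrullDim (R ⧸ P) := by
  obtain ⟨x, hxQ, hxP⟩ := SetLike.exists_of_lt h
  exact ringKrullDim_succ_le_of_surjective (Ideal.Quotient.factor h.le)
    (Ideal.Quotient.factor_surjective h.le)
    (mem_nonZeroDivisors_of_ne_zero (mt Ideal.Quotient.eq_zero_iff_mem.mp hxP))
    (Ideal.Quotient.eq_zero_iff_mem.mpr hxQ)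

end SupportDimension

section RegularElement

variable {R : Type*} [CommRing R] [IsNoetherianRing R] {K L : Type*} [AddCommGroup K] [Module R K]
  [AddCommGroup L] [Module R L]

theorem notMem_of_isSMulRegular_of_mem_associatedPrimes {x : R} (hx : IsSMulRegular K x)
    {P : Ideal R} (hP : P ∈ associatedPrimes R K) : x ∉ P := fun hxP ↦
  (biUnion_associatedPrimes_eq_compl_regular R K).subset (Set.mem_biUnion hP hxP) hx

theorem exists_mem_isSMulRegular_of_forall_not_le [Module.Finite R K] {I : Ideal R}
    (h : ∀ P ∈ associatedPrimes R K, ¬ I ≤ P) : ∃ x ∈ I, IsSMulRegular K x := by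
  by_contra! hI
  have hI_subset : (I : Set R) ⊆ ⋃ P ∈ associatedPrimes R K, (P : Set R) := by
    rw [biUnion_associatedPrimes_eq_compl_regular]
    exact hI
  obtain ⟨P, hP, hIP⟩ := (I.subset_union_prime_finite (associatedPrimes.finite R K)
    (f := id) 0 0 fun _ hP _ _ ↦ hP.isPrime).1 hI_subset
  exact h P hP hIP

theorem exists_mem_isSMulRegular_and_isSMulRegular [Module.Finite R K] [Module.Finite R L]
    {I : Ideal R} {a b : R} (haI : a ∈ I) (ha : IsSMulRegular K a)
    (hbI : b ∈ I) (hb : IsSMulRegular L b) :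
    ∃ x ∈ I, IsSMulRegular K x ∧ IsSMulRegular L x := by
  obtain ⟨x, hxI, hx⟩ := exists_mem_isSMulRegular_of_forall_not_le (K := K × L) (I := I)
    fun P hP hIP ↦ by
      rw [associatedPrimes.prod] at hP
      exact hP.elim
        (fun hP ↦ notMem_of_isSMulRegular_of_mem_associatedPrimes ha hP (hIP haI))
        (fun hP ↦ notMem_of_isSMulRegular_of_mem_associatedPrimes hb hP (hIP hbI))
  exact ⟨x, hxI, hx.of_injective (LinearMap.inl R K L) LinearMap.inl_injective,
    hx.of_injective (LinearMap.inr R K L) LinearMap.inr_injective⟩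

theorem exists_le_mem_associatedPrimes_quotSMulTop [IsLocalRing R] [Module.Finite R K] {x : R}
    (hxm : x ∈ maximalIdeal R) (hx : IsSMulRegular K x) {P : Ideal R}
    (hP : P ∈ associatedPrimes R K) : ∃ Q ∈ associatedPrimes R (QuotSMulTop x K), P ≤ Q := by
  by_contra! h
  obtain ⟨y, hyP, hy⟩ := exists_mem_isSMulRegular_of_forall_not_le h
  have hym : y ∈ maximalIdeal R := le_maximalIdeal hP.isPrime.ne_top hyP
  have hxy : IsWeaklyRegular K [x, y] := .cons hx ((isWeaklyRegular_singleton_iff _ y).mpr hy)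
  have hyx : IsWeaklyRegular K [y, x] :=
    isWeaklyRegular_of_perm_of_subset_maximalIdeal hxy (.swap y x []) (by simpa using ⟨hxm, hym⟩)
  exact notMem_of_isSMulRegular_of_mem_associatedPrimes
    ((isWeaklyRegular_cons_iff K y _).mp hyx).1 hP hyP

theorem exists_lt_mem_associatedPrimes_quotSMulTop [IsLocalRing R] [Module.Finite R K] {x : R}
    (hxm : x ∈ maximalIdeal R) (hx : IsSMulRegular K x) {P : Ideal R}
    (hP : P ∈ associatedPrimes R K) : ∃ Q ∈ associatedPrimes R (QuotSMulTop x K), P < Q := by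
  obtain ⟨Q, hQ, hPQ⟩ := exists_le_mem_associatedPrimes_quotSMulTop hxm hx hP
  have hxQ : x ∈ Q := hQ.annihilator_le <| by
    rw [Submodule.annihilator_top]
    exact QuotSMulTop.mem_annihilator K x
  exact ⟨Q, hQ, SetLike.lt_iff_le_and_exists.mpr
    ⟨hPQ, x, hxQ, notMem_of_isSMulRegular_of_mem_associatedPrimes hx hP⟩⟩

end RegularElement

section Quotient

variable {R : Type*} [CommRing R] {K : Type*} [AddCommGroup K] [Module R K] {I : Ideal R}

theorem smul_top_lt_top_of_isLocalRing [IsLocalRing R] [Module.Finite R K] [Nontrivial K]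
    (hI : I ≠ ⊤) : I • (⊤ : Submodule R K) < ⊤ :=
  (Submodule.top_ne_ideal_smul_of_le_jacobson_annihilator
    ((le_maximalIdeal hI).trans (maximalIdeal_le_jacobson _))).symm.lt_top

theorem smul_top_quotSMulTop_lt_top {x : R} (hx : x ∈ I) (hI : I • (⊤ : Submodule R K) < ⊤) :
    I • (⊤ : Submodule R (QuotSMulTop x K)) < ⊤ := by
  have hker : x • (⊤ : Submodule R K) ≤ I • ⊤ := by
    rw [← Submodule.ideal_span_singleton_smul]
    exact Submodule.smul_mono_left ((Ideal.span_singleton_le_iff_mem I).mpr hx)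
  refine lt_top_iff_ne_top.mpr fun h ↦ hI.ne ?_
  rw [← sup_of_le_left hker]
  simpa using (Submodule.comap_smul_top_of_surjective I (x • (⊤ : Submodule R K)).mkQ
    (Submodule.mkQ_surjective _)).symm.trans (congrArg _ h)

end Quotient

/-- The ideal `I` contains a `K`-regular sequence of length `n`, that is, `grade I K ≥ n`. For
`I` the maximal ideal of a local ring this says `depth K ≥ n`. -/
def HasRegularSequence {R : Type*} [CommRing R] (I : Ideal R) (K : Type*) [AddCommGroup K]
    [Module R K] (n : ℕ) : Prop :=
  ∃ rs : List R, rs.length = n ∧ (∀ r ∈ rs, r ∈ I) ∧ IsRegular K rs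

namespace HasRegularSequence

section Grade

variable {R : Type u} [CommRing R] {I : Ideal R} {n : ℕ}

theorem zero {K : Type*} [AddCommGroup K] [Module R K] [Nontrivial K] :
    HasRegularSequence I K 0 :=
  ⟨[], rfl, by simp, .nil R K⟩

theorem nontrivial {K : Type*} [AddCommGroup K] [Module R K] (h : HasRegularSequence I K n) :
    Nontrivial K :=
  let ⟨_, _, _, hrs⟩ := h
  hrs.nontrivial

theorem cons {K : Type*} [AddCommGroup K] [Module R K] {x : R} (hxI : x ∈ I)
    (hx : IsSMulRegular K x) (h : HasRegularSequence I (QuotSMulTop x K) n) :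
    HasRegularSequence I K (n + 1) := by
  obtain ⟨rs, rfl, hrsI, hrs⟩ := h
  exact ⟨x :: rs, rfl, List.forall_mem_cons.mpr ⟨hxI, hrsI⟩, .cons hx hrs⟩

theorem exists_isSMulRegular {K : Type*} [AddCommGroup K] [Module R K]
    (h : HasRegularSequence I K (n + 1)) :
    ∃ x ∈ I, IsSMulRegular K x ∧ HasRegularSequence I (QuotSMulTop x K) n := by
  obtain ⟨_ | ⟨x, rs⟩, hlen, hrsI, hrs⟩ := h
  · simp at hlen
  obtain ⟨hxI, hrsI⟩ := List.forall_mem_cons.mp hrsI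
  obtain ⟨hx, hrs⟩ := (isRegular_cons_iff K x rs).mp hrs
  exact ⟨x, hxI, hx, rs, by simpa using hlen, hrsI, hrs⟩

variable [IsNoetherianRing R] [Small.{v} R] {K L : Type v} [AddCommGroup K] [Module R K]
  [Module.Finite R K] [AddCommGroup L] [Module R L] [Module.Finite R L]

theorem iff_subsingleton_ext (hI : I • (⊤ : Submodule R K) < ⊤) :
    HasRegularSequence I K n ↔ ∀ i < n,
      Subsingleton (Ext (ModuleCat.of R (Shrink.{v} (R ⧸ I))) (ModuleCat.of R K) i) :=
  (ModuleCat.exists_isRegular_tfae I n (ModuleCat.of R K) hI).out 3 1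

theorem quotSMulTop (h : HasRegularSequence I K (n + 1)) (hI : I • (⊤ : Submodule R K) < ⊤)
    {x : R} (hxI : x ∈ I) (hx : IsSMulRegular K x) :
    HasRegularSequence I (QuotSMulTop x K) n := by
  rw [iff_subsingleton_ext hI] at h
  rw [iff_subsingleton_ext (smul_top_quotSMulTop_lt_top hxI hI)]
  intro i hi
  have hK := AddCommGrpCat.isZero_of_iff_subsingleton.mpr (h i (by lia))
  have hK' := AddCommGrpCat.isZero_of_iff_subsingleton.mpr (h (i + 1) (by lia))
  exact AddCommGrpCat.subsingleton_of_isZero <| ShortComplex.Exact.isZero_of_both_zeros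
    (Ext.covariant_sequence_exact₃' _ (IsSMulRegular.smulShortComplex_shortExact
      (M := ModuleCat.of R K) hx) i (i + 1) rfl)
    (hK.eq_zero_of_src _) (hK'.eq_zero_of_tgt _)

theorem exists_isRegular_and_isRegular (hK : HasRegularSequence I K n)
    (hL : HasRegularSequence I L n) (hIK : I • (⊤ : Submodule R K) < ⊤)
    (hIL : I • (⊤ : Submodule R L) < ⊤) :
    ∃ rs : List R, rs.length = n ∧ (∀ r ∈ rs, r ∈ I) ∧ IsRegular K rs ∧ IsRegular L rs := by
  induction n generalizing K L with
  | zero =>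
    have := hK.nontrivial
    have := hL.nontrivial
    exact ⟨[], rfl, by simp, .nil R K, .nil R L⟩
  | succ n ih =>
    obtain ⟨a, haI, ha, -⟩ := hK.exists_isSMulRegular
    obtain ⟨b, hbI, hb, -⟩ := hL.exists_isSMulRegular
    obtain ⟨x, hxI, hxK, hxL⟩ := exists_mem_isSMulRegular_and_isSMulRegular haI ha hbI hb
    obtain ⟨rs, rfl, hrsI, hrsK, hrsL⟩ :=
      ih (hK.quotSMulTop hIK hxI hxK) (hL.quotSMulTop hIL hxI hxL)
        (smul_top_quotSMulTop_lt_top hxI hIK) (smul_top_quotSMulTop_lt_top hxI hIL)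
    exact ⟨x :: rs, rfl, List.forall_mem_cons.mpr ⟨hxI, hrsI⟩, .cons hxK hrsK, .cons hxL hrsL⟩

end Grade

section Depth

variable {R : Type u} [CommRing R] [IsLocalRing R] [IsNoetherianRing R]
  {K : Type v} [AddCommGroup K] [Module R K] [Module.Finite R K]
  {L : Type*} [AddCommGroup L] [Module R L] [Module.Finite R L]

theorem le_ringKrullDim_quotient {n : ℕ} (h : HasRegularSequence (maximalIdeal R) K n)
    {P : Ideal R} (hP : P ∈ associatedPrimes R K) :
    n ≤ ringKrullDim (R ⧸ P) := by
  induction n generalizing K P with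
  | zero =>
    have := Ideal.Quotient.nontrivial_iff.mpr hP.isPrime.ne_top
    exact ringKrullDim_nonneg_of_nontrivial
  | succ n ih =>
    have := hP.isPrime
    obtain ⟨x, hxm, hx, hKx⟩ := h.exists_isSMulRegular
    obtain ⟨Q, hQ, hPQ⟩ := exists_lt_mem_associatedPrimes_quotSMulTop hxm hx hP
    calc ((n + 1 : ℕ) : WithBot ℕ∞) = n + 1 := by push_cast; rfl
      _ ≤ ringKrullDim (R ⧸ Q) + 1 := by gcongr; exact ih hKx hQ
      _ ≤ ringKrullDim (R ⧸ P) := ringKrullDim_quotient_succ_le_of_lt hPQ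

theorem exists_mem_annihilator_isSMulRegular {n : ℕ} (h : HasRegularSequence (maximalIdeal R) K n)
    (hdim : Module.supportDim R (K ⊗[R] L) < n) :
    ∃ x ∈ Module.annihilator R L, IsSMulRegular K x := by
  refine exists_mem_isSMulRegular_of_forall_not_le fun P hP hLP ↦ ?_
  have hKP : Module.annihilator R K ≤ P := by
    rw [← Submodule.annihilator_top]
    exact hP.annihilator_le
  have hP_support : (⟨P, hP.isPrime⟩ : PrimeSpectrum R) ∈ Module.support R (K ⊗[R] L) := by
    rw [support_tensorProduct_eq_inter]
    exact ⟨Module.mem_support_iff_of_finite.mpr hKP, Module.mem_support_iff_of_finite.mpr hLP⟩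
  have hP_dim := ringKrullDim_quotient_le_supportDim_of_mem_support hP_support
  exact ((h.le_ringKrullDim_quotient hP).trans hP_dim).not_gt hdim

theorem annihilator_of_supportDim_tensorProduct_le [Small.{v} R] [Nontrivial L] {d n : ℕ}
    (h : HasRegularSequence (maximalIdeal R) K (d + n))
    (hdim : Module.supportDim R (K ⊗[R] L) ≤ d) :
    HasRegularSequence (Module.annihilator R L) K n := by
  induction n generalizing K with
  | zero =>
    have := h.nontrivial
    exact .zero
  | succ n ih =>
    have := h.nontrivial
    obtain ⟨x, hxL, hx⟩ := h.exists_mem_annihilator_isSMulRegular (L := L)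
      (hdim.trans_lt (by exact_mod_cast (by lia : d < d + (n + 1))))
    have hxm : x ∈ maximalIdeal R := le_maximalIdeal
      (Module.annihilator_eq_top_iff.not.mpr (not_subsingleton L)) hxL
    have hdim_le : Module.supportDim R (QuotSMulTop x K ⊗[R] L) ≤ Module.supportDim R (K ⊗[R] L) :=
      Module.supportDim_le_of_surjective ((x • (⊤ : Submodule R K)).mkQ.rTensor L)
        (LinearMap.rTensor_surjective L (Submodule.mkQ_surjective _))
    exact .cons hxL hx <| ih
      (h.quotSMulTop (smul_top_lt_top_of_isLocalRing (maximalIdeal.isMaximal R).ne_top) hxm hx)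
      (hdim_le.trans hdim)

theorem exists_isRegular_and_isRegular_of_supportDim_tensorProduct_le [Small.{v} R]
    {K' : Type v} [AddCommGroup K'] [Module R K'] [Module.Finite R K'] [Nontrivial L] {d e n : ℕ}
    (hK : HasRegularSequence (maximalIdeal R) K (d + n))
    (hK' : HasRegularSequence (maximalIdeal R) K' (e + n))
    (hKL : Module.supportDim R (K ⊗[R] L) ≤ d) (hK'L : Module.supportDim R (K' ⊗[R] L) ≤ e) :
    ∃ rs : List R, rs.length = n ∧ (∀ r ∈ rs, r ∈ Module.annihilator R L) ∧
      IsRegular K rs ∧ IsRegular K' rs := by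
  have hL : Module.annihilator R L ≠ ⊤ :=
    Module.annihilator_eq_top_iff.not.mpr (not_subsingleton L)
  have := hK.nontrivial
  have := hK'.nontrivial
  exact (hK.annihilator_of_supportDim_tensorProduct_le hKL).exists_isRegular_and_isRegular
    (hK'.annihilator_of_supportDim_tensorProduct_le hK'L)
    (smul_top_lt_top_of_isLocalRing hL) (smul_top_lt_top_of_isLocalRing hL)

end Depth

end HasRegularSequence

section CohenMacaulay

variable {R : Type u} [CommRing R] {K : Type u} [AddCommGroup K] [Module R K]

theorem moduleDim_eq_supportDim [Module.Finite R K] :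
    moduleDim R K = Module.supportDim R K :=
  (Module.supportDim_eq_ringKrullDim_quotient_annihilator R K).symm

theorem moduleDim_self : moduleDim R R = ringDim R :=
  moduleDim_eq_supportDim.trans (Module.supportDim_self_eq_ringKrullDim R)

variable [IsLocalRing R] [Nontrivial K]

theorem hasRegularSequence_of_moduleDepth_eq {n : ℕ} (h : moduleDepth R K = n) :
    HasRegularSequence (maximalIdeal R) K n := by
  have : Nonempty {n : ℕ∞ | ∃ rs : List R, n = (rs.length : ℕ∞) ∧
      (∀ x ∈ rs, x ∈ maximalIdeal R) ∧ IsRegular K rs} :=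
    ⟨0, [], rfl, by simp, .nil R K⟩
  obtain ⟨rs, hlen, hrsm, hrs⟩ := ENat.sSup_mem_of_nonempty_of_lt_top
    (h.trans_lt (ENat.natCast_lt_top n))
  exact ⟨rs, by exact_mod_cast hlen.symm.trans h, hrsm, hrs⟩

theorem exists_nat_of_moduleDepth_eq_moduleDim [IsNoetherianRing R] [Module.Finite R K]
    (h : (moduleDepth R K : WithBot ℕ∞) = moduleDim R K) :
    ∃ n : ℕ, moduleDepth R K = n ∧ Module.supportDim R K = n ∧
      HasRegularSequence (maximalIdeal R) K n := by
  obtain ⟨n, hn⟩ := exists_nat_eq_supportDim (R := R) (K := K)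
  have hdepth : moduleDepth R K = n :=
    WithBot.coe_injective (h.trans (moduleDim_eq_supportDim.trans hn))
  exact ⟨n, hdepth, hn, hasRegularSequence_of_moduleDepth_eq hdepth⟩

end CohenMacaulay

theorem stmt_7 (R : Type u) [CommRing R] [IsLocalRing R] [IsNoetherianRing R]
    (hR : (moduleDepth R R : WithBot ℕ∞) = ringDim R)
    (M N : Type u) [AddCommGroup M] [Module R M] [AddCommGroup N] [Module R N]
    [Module.Finite R M] [Module.Finite R N] [Nontrivial M] [Nontrivial N]
    (hCM_M : (moduleDepth R M : WithBot ℕ∞) = moduleDim R M)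
    (hCM_N : (moduleDepth R N : WithBot ℕ∞) = moduleDim R N)
    (hdim : moduleDim R (M ⊗[R] N) + ringDim R ≤ moduleDim R M + moduleDim R N) :
    ∃ xs : List R, (∀ x ∈ xs, x ∈ Module.annihilator R N) ∧
      RingTheory.Sequence.IsRegular M xs ∧ RingTheory.Sequence.IsRegular R xs ∧
      ((moduleDepth R N + (xs.length : ℕ∞) : ℕ∞) : WithBot ℕ∞) = ringDim R := by
  obtain ⟨m, -, hMdim, hM⟩ := exists_nat_of_moduleDepth_eq_moduleDim hCM_M
  obtain ⟨n, hNdepth, hNdim, -⟩ := exists_nat_of_moduleDepth_eq_moduleDim hCM_N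
  obtain ⟨r, hRdepth, hRdim, hRm⟩ :=
    exists_nat_of_moduleDepth_eq_moduleDim (hR.trans moduleDim_self.symm)
  have := nontrivial_tensorProduct_of_isLocalRing (R := R) (K := M) (L := N)
  obtain ⟨t, hMNdim⟩ := exists_nat_eq_supportDim (R := R) (K := M ⊗[R] N)
  have hnr : n ≤ r := by
    have := Module.supportDim_le_ringKrullDim R N
    rw [← Module.supportDim_self_eq_ringKrullDim, hNdim, hRdim] at this
    exact_mod_cast this
  obtain ⟨k, rfl⟩ := Nat.exists_eq_add_of_le hnr
  have htk : t + (n + k) ≤ m + n := by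
    rw [← moduleDim_self] at hdim
    simp only [moduleDim_eq_supportDim, hMNdim, hMdim, hNdim, hRdim] at hdim
    exact_mod_cast hdim
  obtain ⟨d, rfl⟩ := Nat.exists_eq_add_of_le' (show k ≤ m by lia)
  obtain ⟨xs, rfl, hxs, hxM, hxR⟩ :=
    hM.exists_isRegular_and_isRegular_of_supportDim_tensorProduct_le hRm (L := N)
      (by rw [hMNdim]; exact_mod_cast (by lia : t ≤ d))
      ((Module.supportDim_eq_of_equiv (TensorProduct.lid R N)).trans hNdim).le
  refine ⟨xs, hxs, hxM, hxR, ?_⟩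
  rw [← hR, hNdepth, hRdepth]
  rfl
end

section
/- Let R be a Noetherian local ring that is equidimensional (dim R/p = dim R for every minimal prime p of R) and catenary. Assume that (PS) holds for every localization of R: for every prime q of R and all nonzero finitely generated R_q-modules A and B with pd_{R_q} B < ∞ and A ⊗_{R_q} B of finite length, dim A ≤ grade B. Then for every nonzero finitely generated R-module N with pd_R N < ∞ and every minimal prime p of R, there exists a minimal prime q of N with p ⊆ q. -/
/-!
STATEMENT 12: If `R` is an equidimensional catenary Noetherian local ring and the
Peskine–Szpiro statement (PS) holds at every localization of `R`, then for every nonzero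
finitely generated `R`-module `N` of finite projective dimension and every minimal prime `p`
of `R` there is a minimal prime `q` of `N` with `p ⊆ q`.
-/

open CategoryTheory CategoryTheory.Limits

open scoped TensorProduct

universe u

/-- The grade of a module `M`: the supremum of lengths of `R`-regular sequences of elements
of `ann M`. -/
noncomputable def moduleGrade (R : Type u) [CommRing R] (M : Type u) [AddCommGroup M]
    [Module R M] : ℕ∞ :=
  sSup {n : ℕ∞ | ∃ rs : List R, n = (rs.length : ℕ∞) ∧
    (∀ x ∈ rs, x ∈ Module.annihilator R M) ∧ RingTheory.Sequence.IsRegular R rs}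

/-- A module has finite projective dimension iff for some `n` the functors `Ext^i(M, -)`
vanish for all `i > n`. -/
def HasFinitePD (R : Type u) [CommRing R] (M : Type u) [AddCommGroup M] [Module R M] : Prop :=
  ∃ n : ℕ, ∀ i : ℕ, n < i → ∀ L : ModuleCat.{u} R,
    IsZero (((Ext R (ModuleCat.{u} R) i).obj (Opposite.op (ModuleCat.of R M))).obj L)

/-- A chain of primes is saturated if there is no prime strictly between two consecutive
entries. -/
def IsSaturatedChain (R : Type u) [CommRing R] (l : LTSeries (PrimeSpectrum R)) : Prop :=
  ∀ i : Fin l.length, ¬ ∃ x : PrimeSpectrum R, l i.castSucc < x ∧ x < l i.succ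

/-- A ring is catenary if for any primes `p ⊆ q` all saturated chains of primes from `p` to `q`
have the same length. -/
def IsCatenary (R : Type u) [CommRing R] : Prop :=
  ∀ p q : PrimeSpectrum R, p ≤ q →
    ∀ l₁ l₂ : LTSeries (PrimeSpectrum R),
      l₁.head = p → l₁.last = q → l₂.head = p → l₂.last = q →
      IsSaturatedChain R l₁ → IsSaturatedChain R l₂ → l₁.length = l₂.length

/-!
Let `q` be a prime minimal over `p + ann N`, and write `S = R_q`. Then `S/pS ⊗ N_q` has finite
length, so (PS) and the bound of the grade by the height give
`dim S/pS ≤ grade N_q ≤ height (ann N_q)`. Since `R` is equidimensional and catenary, all saturated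
chains from a minimal prime to `q` have the same length, whence `dim S ≤ dim S/pS`. Hence the
maximal ideal of `S` has height at most that of `ann N_q = (ann N)S`, so it is minimal over
`(ann N)S`; that is, `q` is a minimal prime of `N`.
-/

section ExtComparison

variable {C : Type*} [Category C] [Abelian C] {X : C}

lemma isZero_Ext_succ_iff (R : Type*) [Ring R] [Linear R C] [EnoughProjectives C]
    (P : ProjectiveResolution X) (i : ℕ) (Y : C) :
    IsZero (((Ext R C (i + 1)).obj (Opposite.op X)).obj Y) ↔
      ∀ g : P.complex.X (i + 1) ⟶ Y, P.complex.d (i + 2) (i + 1) ≫ g = 0 →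
        ∃ h : P.complex.X i ⟶ Y, P.complex.d (i + 1) i ≫ h = g := by
  rw [(P.isoExt (i + 1) Y).isZero_iff, ← HomologicalComplex.exactAt_iff_isZero_homology,
    HomologicalComplex.exactAt_iff' _ i (i + 1) (i + 2) (by simp) (by simp),
    ShortComplex.moduleCat_exact_iff]
  rfl

lemma forall_abelianExt_succ_eq_zero_iff [HasExt C] (P : ProjectiveResolution X) (i : ℕ) (Y : C) :
    (∀ e : Abelian.Ext X Y (i + 1), e = 0) ↔
      ∀ g : P.complex.X (i + 1) ⟶ Y, P.complex.d (i + 2) (i + 1) ≫ g = 0 →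
        ∃ h : P.complex.X i ⟶ Y, P.complex.d (i + 1) i ≫ h = g := by
  refine ⟨fun h g hg ↦ (P.extMk_eq_zero_iff g (i + 2) rfl hg i rfl).1 (h _), fun h e ↦ ?_⟩
  obtain ⟨g, hg, rfl⟩ := P.extMk_surjective e (i + 2) rfl
  exact (P.extMk_eq_zero_iff g (i + 2) rfl hg i rfl).2 (h g hg)

end ExtComparison

-- `HasFinitePD` uses `Ext` as a derived functor, `HasProjectiveDimensionLE` uses morphisms in the
-- derived category; any projective resolution computes both.
lemma hasFinitePD_iff_exists_hasProjectiveDimensionLE {R M : Type u} [CommRing R] [AddCommGroup M]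
    [Module R M] :
    HasFinitePD R M ↔ ∃ n, HasProjectiveDimensionLE (ModuleCat.of R M) n := by
  let P := projectiveResolution (ModuleCat.of R M)
  refine exists_congr fun n ↦ ?_
  rw [HasProjectiveDimensionLE, hasProjectiveDimensionLT_iff]
  refine forall₂_congr fun i hi ↦ forall_congr' fun Y ↦ ?_
  obtain ⟨i, rfl⟩ := Nat.exists_eq_add_one_of_ne_zero (Nat.ne_zero_of_lt hi)
  rw [isZero_Ext_succ_iff R P, forall_abelianExt_succ_eq_zero_iff P]

lemma HasFinitePD.localizedModule {R M : Type u} [CommRing R] [AddCommGroup M] [Module R M]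
    (h : HasFinitePD R M) (S : Submonoid R) :
    HasFinitePD (Localization S) (LocalizedModule S M) := by
  obtain ⟨n, _⟩ := hasFinitePD_iff_exists_hasProjectiveDimensionLE.1 h
  have := ModuleCat.localizedModule_hasProjectiveDimensionLE n S (ModuleCat.of R M)
  exact hasFinitePD_iff_exists_hasProjectiveDimensionLE.2
    ⟨n, ModuleCat.hasProjectiveDimensionLE_of_linearEquiv
      (M := (ModuleCat.of R M).localizedModule S) (Shrink.linearEquiv (Localization S) _) n⟩

section CatenaryOrders

/-- Catenarity of a partial order: all saturated chains with the same end points have the same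
length. Saturated chains are encoded as series for the covering relation `⋖`; a ring is catenary
when its prime spectrum has this property. -/
def IsCatenaryOrder (α : Type*) [PartialOrder α] : Prop :=
  ∀ s t : RelSeries {(a, b) : α × α | a ⋖ b},
    s.head = t.head → s.last = t.last → s.length = t.length

lemma wellFoundedLT_of_finiteDimensionalOrder (α : Type*) [Preorder α] [FiniteDimensionalOrder α] :
    WellFoundedLT α :=
  ⟨SetRel.IsWellFounded.of_finiteDimensional {(a, b) : α × α | a < b}⟩

lemma wellFoundedGT_of_finiteDimensionalOrder (α : Type*) [Preorder α] [FiniteDimensionalOrder α] :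
    WellFoundedGT α :=
  ⟨SetRel.IsWellFounded.inv_of_finiteDimensional {(a, b) : α × α | a < b}⟩

variable {α : Type*} [PartialOrder α]

lemma exists_ltSeries_head_eq_last_eq (s : LTSeries α) {a b : α} (ha : a ≤ s.head)
    (hb : s.last ≤ b) : ∃ t : LTSeries α, t.head = a ∧ t.last = b ∧ s.length ≤ t.length := by
  obtain ⟨t, hta, hts, hst⟩ : ∃ t : LTSeries α, t.head = a ∧ t.last = s.last ∧
      s.length ≤ t.length := by
    obtain rfl | hlt := ha.eq_or_lt
    · exact ⟨s, rfl, rfl, le_rfl⟩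
    · exact ⟨s.cons a hlt, by simp, by simp, by simp⟩
  obtain rfl | hlt := hb.eq_or_lt
  · exact ⟨t, hta, hts, hst⟩
  · exact ⟨t.snoc b (by simpa [hts] using hlt), by simpa using hta, by simp, hst.trans (by simp)⟩

variable [WellFoundedLT α] [WellFoundedGT α]

lemma exists_relSeries_covBy_head_eq_last_eq (s : LTSeries α) {a b : α} (ha : a ≤ s.head)
    (hb : s.last ≤ b) : ∃ t : RelSeries {(a, b) : α × α | a ⋖ b},
      t.head = a ∧ t.last = b ∧ s.length ≤ t.length := by
  obtain ⟨s', rfl, rfl, hs'⟩ := exists_ltSeries_head_eq_last_eq s ha hb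
  obtain ⟨t, i, hi, hzero, hlast⟩ := s'.exists_relSeries_covBy
  refine ⟨t, ?_, ?_, hs'.trans (by simpa using Fintype.card_le_of_embedding i)⟩
  · exact (congrArg t hzero.symm).trans (congrFun hi 0)
  · exact (congrArg t hlast.symm).trans (congrFun hi (.last _))

lemma exists_relSeries_covBy_of_le {a b : α} (hab : a ≤ b) :
    ∃ t : RelSeries {(a, b) : α × α | a ⋖ b}, t.head = a ∧ t.last = b := by
  obtain ⟨t, ha, hb, -⟩ :=
    exists_relSeries_covBy_head_eq_last_eq (RelSeries.singleton _ a : LTSeries α) le_rfl hab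
  exact ⟨t, ha, hb⟩

variable [OrderTop α]

lemma IsCatenaryOrder.length_eq_coheight_head (hα : IsCatenaryOrder α)
    {s : RelSeries {(a, b) : α × α | a ⋖ b}} (hs : s.last = ⊤) :
    s.length = Order.coheight s.head := by
  refine le_antisymm
    (Order.length_le_coheight_head (p := s.ofLE (s := {(a, b) : α × α | a < b}) fun _ ↦ CovBy.lt))
    (Order.coheight_le fun l hl ↦ ?_)
  obtain ⟨t, hth, htl, hlt⟩ := exists_relSeries_covBy_head_eq_last_eq l hl.ge (le_top (a := l.last))
  rw [hα s t hth.symm (hs.trans htl.symm)]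
  exact_mod_cast hlt

lemma IsCatenaryOrder.length_eq_height_last (hα : IsCatenaryOrder α)
    (hequi : ∀ a : α, IsMin a → (Order.coheight a : WithBot ℕ∞) = Order.krullDim α)
    {s : RelSeries {(a, b) : α × α | a ⋖ b}} (hs : IsMin s.head) :
    s.length = Order.height s.last := by
  obtain ⟨t, hth, htl⟩ := exists_relSeries_covBy_of_le (le_top (a := s.last))
  have length_add_length (v : RelSeries {(a, b) : α × α | a ⋖ b}) (hvh : IsMin v.head)
      (hvl : v.last = t.head) :
      (((v.length + t.length : ℕ) : ℕ∞) : WithBot ℕ∞) = Order.krullDim α := by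
    have := hα.length_eq_coheight_head (s := v.smash t hvl) (by simpa using htl)
    rw [← hequi _ hvh, ← RelSeries.head_smash hvl, ← this]
    rfl
  refine le_antisymm
    (Order.length_le_height_last (p := s.ofLE (s := {(a, b) : α × α | a < b}) fun _ ↦ CovBy.lt))
    (Order.height_le fun l hl ↦ ?_)
  obtain ⟨m, hml, hm⟩ := exists_minimal_le_of_wellFoundedLT (fun _ ↦ True) l.head trivial
  obtain ⟨v, rfl, hvl, hlv⟩ := exists_relSeries_covBy_head_eq_last_eq l hml hl.le
  have heq := (length_add_length v (minimal_true.1 hm) (hvl.trans hth.symm)).trans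
    (length_add_length s hs hth.symm).symm
  have : v.length + t.length = s.length + t.length := by exact_mod_cast heq
  exact_mod_cast hlv.trans (by lia : v.length ≤ s.length)

end CatenaryOrders

section CatenaryRings

variable {R : Type*} [CommRing R]

lemma IsCatenary.isCatenaryOrder (hR : IsCatenary R) : IsCatenaryOrder (PrimeSpectrum R) := by
  intro s t hhead hlast
  have hlt : {(p, q) : PrimeSpectrum R × PrimeSpectrum R | p ⋖ q} ≤
      {(p, q) : PrimeSpectrum R × PrimeSpectrum R | p < q} :=
    fun _ ↦ CovBy.lt
  have isSaturatedChain (v : RelSeries {(p, q) : PrimeSpectrum R × PrimeSpectrum R | p ⋖ q}) :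
      IsSaturatedChain R (v.ofLE hlt) := fun i ⟨_, hlo, hhi⟩ ↦ (v.step i).2 hlo hhi
  exact hR s.head s.last (LTSeries.head_le_last (s.ofLE hlt)) (s.ofLE hlt) (t.ofLE hlt) rfl rfl
    hhead.symm hlast.symm (isSaturatedChain s) (isSaturatedChain t)

lemma coheight_eq_ringKrullDim_quotient (p : PrimeSpectrum R) :
    (Order.coheight p : WithBot ℕ∞) = ringKrullDim (R ⧸ p.asIdeal) := by
  rw [ringKrullDim_quotient, Order.coheight_eq_krullDim_Ici]
  rfl

lemma length_le_ringKrullDim_quotient_map_of_isLocalizationAtPrime (S : Type*) [CommRing S]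
    [Algebra R S] (q : Ideal R) [q.IsPrime] [IsLocalization.AtPrime S q] {I : Ideal R}
    (s : LTSeries (PrimeSpectrum R)) (hI : I ≤ s.head.asIdeal) (hq : s.last.asIdeal ≤ q) :
    s.length ≤ ringKrullDim (S ⧸ I.map (algebraMap R S)) := by
  rw [ringKrullDim_quotient]
  let e := IsLocalization.AtPrime.primeSpectrumOrderIso S q
  exact Order.LTSeries.length_le_krullDim
    (α := PrimeSpectrum.zeroLocus (I.map (algebraMap R S) : Set S))
    ⟨s.length, fun i ↦ ⟨e.symm ⟨s i, (LTSeries.monotone s (Fin.le_last i)).trans hq⟩,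
      Ideal.map_mono (hI.trans (s.head_le i))⟩, fun i ↦ e.symm.strictMono (s.step i)⟩

lemma IsCatenary.height_le_ringKrullDim_localization_quotient_map [IsLocalRing R]
    [FiniteRingKrullDim R] (hR : IsCatenary R)
    (hequi : ∀ p ∈ minimalPrimes R, ringKrullDim (R ⧸ p) = ringKrullDim R) {p q : Ideal R}
    [q.IsPrime] (hp : p ∈ minimalPrimes R) (hpq : p ≤ q) :
    q.height ≤
      ringKrullDim (Localization.AtPrime q ⧸ p.map (algebraMap R (Localization.AtPrime q))) := by
  have : p.IsPrime := hp.1.1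
  have := wellFoundedLT_of_finiteDimensionalOrder (PrimeSpectrum R)
  have := wellFoundedGT_of_finiteDimensionalOrder (PrimeSpectrum R)
  obtain ⟨s, hsp, hsq⟩ := exists_relSeries_covBy_of_le
    (show (⟨p, ‹_›⟩ : PrimeSpectrum R) ≤ ⟨q, ‹_›⟩ from hpq)
  have hs : (s.length : ℕ∞) = q.height := by
    rw [hR.isCatenaryOrder.length_eq_height_last, hsq, ← PrimeSpectrum.height_eq_orderHeight]
    · intro p hp
      rw [coheight_eq_ringKrullDim_quotient, hequi _ (PrimeSpectrum.isMin_iff.1 hp), ringKrullDim]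
    · rwa [hsp, PrimeSpectrum.isMin_iff]
  rw [← hs]
  exact length_le_ringKrullDim_quotient_map_of_isLocalizationAtPrime _ q (s.ofLE fun _ ↦ CovBy.lt)
    (congrArg PrimeSpectrum.asIdeal hsp).ge (congrArg PrimeSpectrum.asIdeal hsq).le

end CatenaryRings

section GradeHeight

open RingTheory.Sequence

lemma length_le_height_of_isWeaklyRegular {R : Type*} [CommRing R] [IsNoetherianRing R]
    {I : Ideal R} {rs : List R} (hreg : IsWeaklyRegular R rs) (hI : ∀ x ∈ rs, x ∈ I) :
    rs.length ≤ I.height := by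
  rw [Ideal.height_eq_inf_minimalPrimes]
  refine le_iInf₂ fun p hp ↦ ?_
  have : p.IsPrime := hp.1.1
  let S := Localization.AtPrime p
  have hregS : IsRegular S (rs.map (algebraMap R S)) :=
    hreg.isRegular_of_isLocalization_of_mem S p fun x hx ↦ hp.1.2 (hI x hx)
  have hdim := ringKrullDim_add_length_eq_ringKrullDim_of_isRegular _ hregS
  rw [IsLocalization.AtPrime.ringKrullDim_eq_height p S, List.length_map] at hdim
  have : Nontrivial (S ⧸ Ideal.ofList (rs.map (algebraMap R S))) :=
    Ideal.Quotient.nontrivial_iff.2 (by simpa using hregS.top_ne_smul.symm)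
  exact_mod_cast (le_add_of_nonneg_left ringKrullDim_nonneg_of_nontrivial).trans_eq hdim

lemma moduleGrade_le_height_annihilator (R M : Type u) [CommRing R] [IsNoetherianRing R]
    [AddCommGroup M] [Module R M] : moduleGrade R M ≤ (Module.annihilator R M).height := by
  refine sSup_le ?_
  rintro _ ⟨rs, rfl, hmem, hreg⟩
  exact length_le_height_of_isWeaklyRegular hreg.toIsWeaklyRegular hmem

end GradeHeight

section AnnihilatorLocalization

variable {R M M' : Type*} [CommRing R] [AddCommGroup M] [Module R M] [AddCommGroup M'] [Module R M']

lemma annihilator_le_annihilator_of_isLocalizedModule (S : Submonoid R) (f : M →ₗ[R] M')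
    [IsLocalizedModule S f] :
    Module.annihilator R M ≤ Module.annihilator R M' := by
  intro a ha
  refine Module.mem_annihilator.2 fun y ↦ ?_
  obtain ⟨⟨m, s⟩, rfl⟩ := IsLocalizedModule.mk'_surjective S f y
  rw [Function.uncurry_apply_pair, ← IsLocalizedModule.mk'_smul, Module.mem_annihilator.1 ha,
    IsLocalizedModule.mk'_zero]

variable [Module.Finite R M]

lemma exists_mul_mem_annihilator_of_isLocalizedModule (S : Submonoid R) (f : M →ₗ[R] M')
    [IsLocalizedModule S f] {a : R} (ha : a ∈ Module.annihilator R M') :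
    ∃ s ∈ S, s * a ∈ Module.annihilator R M := by
  obtain ⟨t, ht⟩ := Module.Finite.fg_top (R := R) (M := M)
  have exists_smul_eq_zero (m : M) : ∃ s : S, (s * a : R) • m = 0 := by
    obtain ⟨s, hs⟩ := (IsLocalizedModule.eq_zero_iff S f (m := a • m)).1
      (by rw [map_smul, Module.mem_annihilator.1 ha])
    exact ⟨s, by rw [mul_smul]; exact hs⟩
  choose s hs using exists_smul_eq_zero
  refine ⟨∏ m ∈ t, (s m : R), prod_mem fun m _ ↦ (s m).2, ?_⟩
  rw [← Submodule.annihilator_top, ← ht, Submodule.mem_annihilator_span]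
  rintro ⟨m, hm⟩
  obtain ⟨c, hc⟩ := Finset.dvd_prod_of_mem (fun m ↦ (s m : R)) hm
  rw [hc, mul_right_comm, mul_comm, mul_smul, hs, smul_zero]

lemma annihilator_eq_map_of_isLocalizedModule (S : Submonoid R) (f : M →ₗ[R] M')
    [IsLocalizedModule S f] (A : Type*) [CommRing A] [Algebra R A] [IsLocalization S A]
    [Module A M'] [IsScalarTower R A M'] :
    Module.annihilator A M' = (Module.annihilator R M).map (algebraMap R A) := by
  have comap_annihilator : (Module.annihilator A M').comap (algebraMap R A) =
      Module.annihilator R M' := Module.comap_annihilator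
  refine le_antisymm (fun x hx ↦ ?_) (Ideal.map_le_iff_le_comap.2
    ((annihilator_le_annihilator_of_isLocalizedModule S f).trans comap_annihilator.ge))
  obtain ⟨a, s, rfl⟩ := IsLocalization.exists_mk'_eq S x
  rw [IsLocalization.mk'_mem_iff] at hx ⊢
  rw [IsLocalization.algebraMap_mem_map_algebraMap_iff S]
  exact exists_mul_mem_annihilator_of_isLocalizedModule S f (comap_annihilator.le hx)

end AnnihilatorLocalization

section FiniteLength

lemma isFiniteLength_of_le_annihilator {R M : Type*} [CommRing R] [IsNoetherianRing R]
    [AddCommGroup M] [Module R M] [Module.Finite R M] {I : Ideal R} [IsArtinianRing (R ⧸ I)]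
    (hI : I ≤ Module.annihilator R M) : IsFiniteLength R M := by
  have hM : Module.IsTorsionBySet R M I := fun m x ↦ Module.mem_annihilator.1 (hI x.2) m
  let := hM.module
  have : IsScalarTower R (R ⧸ I) M := hM.isScalarTower
  have := Module.Finite.of_restrictScalars_finite R (R ⧸ I) M
  exact isFiniteLength_iff_isNoetherian_isArtinian.2 ⟨inferInstance,
    isArtinian_of_surjective_algebraMap (R := R ⧸ I) Ideal.Quotient.mk_surjective⟩

lemma annihilator_le_annihilator_tensorProduct_left (R M N : Type*) [CommRing R]
    [AddCommGroup M] [Module R M] [AddCommGroup N] [Module R N] :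
    Module.annihilator R M ≤ Module.annihilator R (M ⊗[R] N) := by
  intro a ha
  refine Module.mem_annihilator.2 fun x ↦ ?_
  induction x with
  | zero => exact smul_zero _
  | add x y hx hy => rw [smul_add, hx, hy, add_zero]
  | tmul m n => rw [TensorProduct.smul_tmul', Module.mem_annihilator.1 ha, TensorProduct.zero_tmul]

lemma annihilator_sup_le_annihilator_tensorProduct (R M N : Type*) [CommRing R]
    [AddCommGroup M] [Module R M] [AddCommGroup N] [Module R N] :
    Module.annihilator R M ⊔ Module.annihilator R N ≤ Module.annihilator R (M ⊗[R] N) :=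
  sup_le (annihilator_le_annihilator_tensorProduct_left R M N)
    ((annihilator_le_annihilator_tensorProduct_left R N M).trans_eq
      (TensorProduct.comm R N M).annihilator_eq)

end FiniteLength

section LocalizationAtPrime

variable {R : Type*} [CommRing R] {q : Ideal R} [q.IsPrime]

lemma maximalIdeal_mem_minimalPrimes_map_iff {I : Ideal R} :
    IsLocalRing.maximalIdeal (Localization.AtPrime q) ∈
        (I.map (algebraMap R (Localization.AtPrime q))).minimalPrimes ↔
      q ∈ I.minimalPrimes := by
  rw [IsLocalization.minimalPrimes_map q.primeCompl, Set.mem_preimage,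
    Localization.AtPrime.under_maximalIdeal]

lemma isFiniteLength_tensorProduct_localizedModule [IsNoetherianRing R] {N : Type*}
    [AddCommGroup N] [Module R N] [Module.Finite R N] {I : Ideal R}
    (hq : q ∈ (I ⊔ Module.annihilator R N).minimalPrimes) :
    IsFiniteLength (Localization.AtPrime q)
      ((Localization.AtPrime q ⧸ I.map (algebraMap R (Localization.AtPrime q)))
        ⊗[Localization.AtPrime q] LocalizedModule q.primeCompl N) := by
  let S := Localization.AtPrime q
  have : IsArtinianRing (S ⧸ (I ⊔ Module.annihilator R N).map (algebraMap R S)) :=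
    IsLocalRing.quotient_artinian_of_mem_minimalPrimes_of_isLocalRing _
      (maximalIdeal_mem_minimalPrimes_map_iff.2 hq)
  refine isFiniteLength_of_le_annihilator (I := (I ⊔ Module.annihilator R N).map (algebraMap R S))
    (le_trans (Eq.le ?_) (annihilator_sup_le_annihilator_tensorProduct S _ _))
  rw [Ideal.map_sup, Ideal.annihilator_quotient, annihilator_eq_map_of_isLocalizedModule
    q.primeCompl (LocalizedModule.mkLinearMap q.primeCompl N) S]

end LocalizationAtPrime

lemma mem_minimalPrimes_annihilator_of_height_le_moduleGrade {R N : Type u} [CommRing R]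
    [IsNoetherianRing R] [AddCommGroup N] [Module R N] [Module.Finite R N] {q : Ideal R} [q.IsPrime]
    (hNq : Module.annihilator R N ≤ q)
    (h : q.height ≤ moduleGrade (Localization.AtPrime q) (LocalizedModule q.primeCompl N)) :
    q ∈ (Module.annihilator R N).minimalPrimes := by
  let S := Localization.AtPrime q
  have annihilator_eq : Module.annihilator S (LocalizedModule q.primeCompl N) =
      (Module.annihilator R N).map (algebraMap R S) :=
    annihilator_eq_map_of_isLocalizedModule q.primeCompl
      (LocalizedModule.mkLinearMap q.primeCompl N) S
  rw [← maximalIdeal_mem_minimalPrimes_map_iff]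
  refine Ideal.mem_minimalPrimes_of_height_le ?_ ?_
  · rw [← Localization.AtPrime.map_eq_maximalIdeal]
    exact Ideal.map_mono hNq
  · calc (IsLocalRing.maximalIdeal S).height = q.height := by
          rw [← WithBot.coe_inj, IsLocalRing.maximalIdeal_height_eq_ringKrullDim,
            IsLocalization.AtPrime.ringKrullDim_eq_height q S]
      _ ≤ moduleGrade S (LocalizedModule q.primeCompl N) := h
      _ ≤ ((Module.annihilator R N).map (algebraMap R S)).height :=
          annihilator_eq ▸ moduleGrade_le_height_annihilator S _

theorem stmt_12 (R : Type u) [CommRing R] [IsLocalRing R] [IsNoetherianRing R]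
    (hequi : ∀ p ∈ minimalPrimes R, ringDim (R ⧸ p) = ringDim R)
    (hcat : IsCatenary R)
    (hPSloc : ∀ (q : Ideal R) [q.IsPrime],
      ∀ (A B : Type u) [AddCommGroup A] [Module (Localization.AtPrime q) A]
        [AddCommGroup B] [Module (Localization.AtPrime q) B]
        [Module.Finite (Localization.AtPrime q) A] [Module.Finite (Localization.AtPrime q) B]
        [Nontrivial A] [Nontrivial B],
        HasFinitePD (Localization.AtPrime q) B →
        IsFiniteLength (Localization.AtPrime q) (A ⊗[Localization.AtPrime q] B) →
        moduleDim (Localization.AtPrime q) A ≤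
          (moduleGrade (Localization.AtPrime q) B : WithBot ℕ∞)) :
    ∀ (N : Type u) [AddCommGroup N] [Module R N] [Module.Finite R N] [Nontrivial N],
      HasFinitePD R N →
      ∀ p ∈ minimalPrimes R, ∃ q ∈ (Module.annihilator R N).minimalPrimes, p ≤ q := by
  intro N _ _ _ _ hN p hp
  have : p.IsPrime := hp.1.1
  have sup_le_maximalIdeal : p ⊔ Module.annihilator R N ≤ IsLocalRing.maximalIdeal R :=
    sup_le (IsLocalRing.le_maximalIdeal ‹p.IsPrime›.ne_top)
      (IsLocalRing.le_maximalIdeal (by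
        rwa [Ne, Module.annihilator_eq_top_iff, not_subsingleton_iff_nontrivial]))
  obtain ⟨q, hq, -⟩ := Ideal.exists_minimalPrimes_le sup_le_maximalIdeal
  have : q.IsPrime := hq.1.1
  have hpq : p ≤ q := le_sup_left.trans hq.1.2
  have hNq : Module.annihilator R N ≤ q := le_sup_right.trans hq.1.2
  let S := Localization.AtPrime q
  have : Nontrivial (S ⧸ p.map (algebraMap R S)) := Ideal.Quotient.nontrivial_iff.2
    (Ideal.isPrime_map_of_isLocalizationAtPrime q hpq).ne_top
  have : Nontrivial (LocalizedModule q.primeCompl N) :=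
    Module.mem_support_iff.1 (Module.mem_support_iff_of_finite (p := ⟨q, ‹_›⟩).2 hNq)
  have hPS := hPSloc q (S ⧸ p.map (algebraMap R S)) (LocalizedModule q.primeCompl N)
    (hN.localizedModule q.primeCompl) (isFiniteLength_tensorProduct_localizedModule hq)
  rw [moduleDim, Ideal.annihilator_quotient] at hPS
  have height_le_grade :=
    (hcat.height_le_ringKrullDim_localization_quotient_map hequi hp hpq).trans hPS
  exact ⟨q, mem_minimalPrimes_annihilator_of_height_le_moduleGrade hNq
    (by exact_mod_cast height_le_grade), hpq⟩
end
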